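/- For every ν ∈ ℂ with ν ≠ −1/2, ∫_{−1}^1 x [P_ν(x)]³ P_ν(−x) dx = sin(2νπ) cos(νπ) / ((2ν+1)² π). -/

import Mathlib

open Real MeasureTheory intervalIntegral Filter Topology

/-- Legendre function of the first kind of complex degree `ν`, defined on `(-1, 1]`
via the Mehler–Dirichlet integral. -/
noncomputable def legendreP (ν : ℂ) (x : ℝ) : ℂ :=
  if x = 1 then 1
  else ((2 / π : ℝ) : ℂ) *
    ∫ β in (0:ℝ)..(Real.arccos x),
      Complex.cos ((2*ν + 1) * (β:ℂ) / 2) / ((Real.sqrt (2 * (Real.cos β - x)) : ℝ) : ℂ)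



/-- Holomorphy of a parametric integral under a locally uniform integrable bound. -/
theorem holo_integral {α : Type*} [MeasurableSpace α] {μ : Measure α} (F : ℂ → α → ℂ)
    (c : ℂ) (ρ : ℝ) (hρ : 0 < ρ) (bound : α → ℝ)
    (hm : ∀ z ∈ Metric.ball c ρ, AEStronglyMeasurable (F z) μ)
    (hd : ∀ᵐ x ∂μ, DifferentiableOn ℂ (fun z => F z x) (Metric.ball c ρ))
    (hb : ∀ᵐ x ∂μ, ∀ z ∈ Metric.ball c ρ, ‖F z x‖ ≤ bound x)
    (hi : Integrable bound μ) :
    DifferentiableAt ℂ (fun z => ∫ x, F z x ∂μ) c := by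
  have hball : Metric.ball c ρ ∈ 𝓝 c := Metric.ball_mem_nhds c hρ
  have hc : c ∈ Metric.ball c ρ := Metric.mem_ball_self hρ
  have hIntegr : Integrable (F c) μ := by
    refine hi.mono' (hm c hc) ?_
    filter_upwards [hb] with x hx using hx c hc
  have hev : ∀ᶠ z in 𝓝 c, AEStronglyMeasurable (F z) μ := by
    filter_upwards [hball] with z hz using hm z hz
  have hder : ∀ᵐ x ∂μ, ∀ z ∈ Metric.ball c ρ, HasDerivAt (fun z => F z x) (deriv (fun z => F z x) z) z := by
    filter_upwards [hd] with x hx z hz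
    exact ((hx z hz).differentiableAt (Metric.isOpen_ball.mem_nhds hz)).hasDerivAt
  have hmeas : AEStronglyMeasurable (fun x => deriv (fun z => F z x) c) μ := by
    obtain ⟨N, hN⟩ := exists_nat_one_div_lt hρ
    have hmem : ∀ n : ℕ, c + ((1 / ((n + N : ℕ) + 1 : ℝ) : ℝ) : ℂ) ∈ Metric.ball c ρ := by
      intro n
      rw [Metric.mem_ball, dist_eq_norm, add_sub_cancel_left, Complex.norm_real, Real.norm_eq_abs,
        abs_of_pos (by positivity)]
      refine lt_of_le_of_lt ?_ hN
      apply one_div_le_one_div_of_le (by positivity)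
      push_cast
      linarith [(Nat.cast_nonneg n : (0:ℝ) ≤ n)]
    refine aestronglyMeasurable_of_tendsto_ae (u := atTop)
      (f := fun (n : ℕ) x => ((1 / ((n + N : ℕ) + 1 : ℝ) : ℝ) : ℂ)⁻¹ •
        (F (c + ((1 / ((n + N : ℕ) + 1 : ℝ) : ℝ) : ℂ)) x - F c x)) ?_ ?_
    · intro n
      exact AEStronglyMeasurable.const_smul ((hm _ (hmem n)).sub (hm c hc)) (((1 / ((n + N : ℕ) + 1 : ℝ) : ℝ) : ℂ)⁻¹)
    · filter_upwards [hder] with x hx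
      have h1 := (hasDerivAt_iff_tendsto_slope_zero.1 (hx c hc))
      refine h1.comp ?_
      rw [tendsto_nhdsWithin_iff]
      constructor
      · have h2 : Tendsto (fun n : ℕ => (1 / ((n + N : ℕ) + 1 : ℝ) : ℝ)) atTop (𝓝 0) :=
          (tendsto_add_atTop_iff_nat (f := fun n : ℕ => (1 / ((n : ℝ) + 1) : ℝ)) N).2
            tendsto_one_div_add_atTop_nhds_zero_nat
        have h3 := (Complex.continuous_ofReal.tendsto 0).comp h2
        rw [Complex.ofReal_zero] at h3
        exact h3
      · refine Eventually.of_forall fun n => ?_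
        simp only [Set.mem_compl_iff, Set.mem_singleton_iff, Complex.ofReal_eq_zero]
        positivity
  refine (hasDerivAt_integral_of_dominated_loc_of_deriv_le (s := Metric.ball c (ρ/2))
    (bound := fun x => bound x / (ρ/4)) (F' := fun z x => deriv (fun z => F z x) z)
    (Metric.ball_mem_nhds c (by linarith)) hev hIntegr hmeas ?_ (hi.div_const _) ?_).2.differentiableAt
  · filter_upwards [hb, hd] with x hx hdx z hz
    apply Complex.norm_deriv_le_of_forall_mem_sphere_norm_le (by linarith)
    · apply DifferentiableOn.diffContOnCl
      refine hdx.mono ?_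
      refine (Metric.closure_ball_subset_closedBall).trans ?_
      intro w hw
      rw [Metric.mem_closedBall] at hw
      rw [Metric.mem_ball] at hz ⊢
      linarith [dist_triangle w z c]
    · intro w hw
      apply hx
      rw [Metric.mem_sphere] at hw
      rw [Metric.mem_ball] at hz ⊢
      linarith [dist_triangle w z c]
  · filter_upwards [hder] with x hx z hz
    exact hx z (Metric.ball_subset_ball (by linarith) hz)

theorem beta_integrable (a b : ℝ) (ha : -1 < a) (hb : -1 < b) :
    IntegrableOn (fun t : ℝ => t^a * (1-t)^b) (Set.Ioo 0 1) := by
  have h := Complex.betaIntegral_convergent (u := ((a+1:ℝ):ℂ)) (v := ((b+1:ℝ):ℂ))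
    (by simp; linarith) (by simp; linarith)
  rw [intervalIntegrable_iff_integrableOn_Ioo_of_le zero_le_one] at h
  refine IntegrableOn.congr_fun (MeasureTheory.Integrable.norm h) ?_ measurableSet_Ioo
  intro t ht
  have h1 : (0:ℝ) < t := ht.1
  have h2 : (0:ℝ) < 1 - t := by linarith [ht.2]
  simp only [norm_mul]
  have e1 : ((a+1:ℝ):ℂ) - 1 = (a:ℂ) := by push_cast; ring
  have e2 : ((b+1:ℝ):ℂ) - 1 = (b:ℂ) := by push_cast; ring
  have e3 : (1:ℂ) - (t:ℂ) = ((1-t:ℝ):ℂ) := by push_cast; ring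
  rw [e1, e2, e3, Complex.norm_cpow_real, Complex.norm_cpow_real, Complex.norm_real, Complex.norm_real,
    Real.norm_of_nonneg h1.le, Real.norm_of_nonneg h2.le]

theorem exp_image : Real.exp '' (Set.Iio 0) = Set.Ioo 0 1 := by
  ext t
  constructor
  · rintro ⟨x, hx, rfl⟩
    exact ⟨Real.exp_pos x, by simpa using hx⟩
  · rintro ⟨h0, h1⟩
    exact ⟨Real.log t, Real.log_neg h0 h1, Real.exp_log h0⟩

theorem exp_cov (g : ℝ → ℂ) :
    ∫ t in Set.Ioo (0:ℝ) 1, g t = ∫ x in Set.Iio (0:ℝ), (Real.exp x : ℂ) * g (Real.exp x) := by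
  rw [← exp_image, integral_image_eq_integral_abs_deriv_smul measurableSet_Iio
    (fun x _ => (Real.hasDerivAt_exp x).hasDerivWithinAt) (Real.exp_injective.injOn)]
  simp [abs_of_pos (Real.exp_pos _)]

theorem exp_cov_int (g : ℝ → ℂ) :
    IntegrableOn g (Set.Ioo (0:ℝ) 1) ↔ IntegrableOn (fun x => (Real.exp x : ℂ) * g (Real.exp x)) (Set.Iio (0:ℝ)) := by
  rw [← exp_image, integrableOn_image_iff_integrableOn_abs_deriv_smul measurableSet_Iio
    (fun x _ => (Real.hasDerivAt_exp x).hasDerivWithinAt) (Real.exp_injective.injOn)]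
  simp [abs_of_pos (Real.exp_pos _)]

theorem cos_image : Real.cos '' (Set.Ioo 0 π) = Set.Ioo (-1) 1 := by
  ext t
  constructor
  · rintro ⟨x, hx, rfl⟩
    constructor
    · rw [← Real.cos_pi]
      exact Real.cos_lt_cos_of_nonneg_of_le_pi hx.1.le le_rfl hx.2
    · rw [← Real.cos_zero]
      exact Real.cos_lt_cos_of_nonneg_of_le_pi le_rfl hx.2.le hx.1
  · rintro ⟨h0, h1⟩
    refine ⟨Real.arccos t, ⟨Real.arccos_pos.2 h1, ?_⟩, Real.cos_arccos h0.le h1.le⟩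
    refine lt_of_le_of_ne (Real.arccos_le_pi t) ?_
    rw [Ne, Real.arccos_eq_pi]
    linarith

theorem cos_cov (g : ℝ → ℂ) :
    ∫ x in (-1:ℝ)..1, g x = ∫ θ in (0:ℝ)..π, (Real.sin θ : ℂ) * g (Real.cos θ) := by
  rw [intervalIntegral.integral_of_le (by norm_num), intervalIntegral.integral_of_le Real.pi_pos.le,
    integral_Ioc_eq_integral_Ioo, integral_Ioc_eq_integral_Ioo, ← cos_image,
    integral_image_eq_integral_abs_deriv_smul measurableSet_Ioo
    (fun x _ => (Real.hasDerivAt_cos x).hasDerivWithinAt)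
    (Real.injOn_cos.mono Set.Ioo_subset_Icc_self)]
  refine setIntegral_congr_fun measurableSet_Ioo fun θ hθ => ?_
  simp [abs_of_pos (Real.sin_pos_of_pos_of_lt_pi hθ.1 hθ.2)]

/-- The Euler integral. -/
noncomputable def eulerU (a : ℝ) (z : ℂ) : ℂ :=
  ∫ t in Set.Ioo (0:ℝ) 1, ((t^a * (1-t)^(-1/2:ℝ) : ℝ) : ℂ) * (1 - z * t) ^ ((-1/2:ℝ):ℂ)

theorem den_ge1 (z : ℂ) (hz : ‖z‖ ≤ 1) (t : ℝ) (h0 : 0 ≤ t) (_h1 : t ≤ 1) : 1 - t ≤ ‖1 - z * t‖ := by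
  have h := norm_sub_norm_le (1:ℂ) (z * t)
  rw [norm_mul, Complex.norm_real, Real.norm_of_nonneg h0, norm_one] at h
  nlinarith

theorem den_ge2 (z : ℂ) (hz : ‖z‖ ≤ 1) (t : ℝ) (h0 : 0 ≤ t) (h1 : t ≤ 1) :
    ‖1 - z‖ / 2 ≤ ‖1 - z * t‖ := by
  have h := den_ge1 z hz t h0 h1
  have h2 : ‖1 - z‖ ≤ ‖1 - z * t‖ + ‖z * ((t - 1 : ℝ) : ℂ)‖ := by
    calc ‖1 - z‖ = ‖(1 - z * t) + z * ((t - 1 : ℝ) : ℂ)‖ := by congr 1; push_cast; ring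
      _ ≤ _ := norm_add_le _ _
  rw [norm_mul, Complex.norm_real, Real.norm_of_nonpos (by linarith)] at h2
  nlinarith [norm_nonneg z]

theorem slit_one_sub (w : ℂ) (hw : ‖w‖ ≤ 1) (hw1 : w ≠ 1) : 1 - w ∈ Complex.slitPlane := by
  rw [Complex.mem_slitPlane_iff]
  by_contra hcon
  push Not at hcon
  obtain ⟨h1, h2⟩ := hcon
  simp at h1 h2
  have h3 : w.re ≤ 1 := (Complex.re_le_norm w).trans hw
  apply hw1
  apply Complex.ext
  · simp; linarith
  · simpa using h2

theorem eulerU_integrand_bound (a : ℝ) (z : ℂ) (hz : ‖z‖ ≤ 1) (hz1 : z ≠ 1) (t : ℝ)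
    (ht : t ∈ Set.Ioo (0:ℝ) 1) :
    ‖((t^a * (1-t)^(-1/2:ℝ) : ℝ) : ℂ) * (1 - z * t) ^ ((-1/2:ℝ):ℂ)‖
      ≤ (‖1 - z‖/2)^(-1/4:ℝ) * (t^a * (1-t)^(-3/4:ℝ)) := by
  have h0 := ht.1
  have h1 : 0 < 1 - t := by linarith [ht.2]
  have hn : 0 < ‖1 - z‖ := norm_pos_iff.2 (sub_ne_zero.2 (Ne.symm hz1))
  have d1 := den_ge1 z hz t ht.1.le ht.2.le
  have d2 := den_ge2 z hz t ht.1.le ht.2.le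
  have hp : 0 < ‖1 - z * t‖ := lt_of_lt_of_le h1 d1
  rw [norm_mul, Complex.norm_cpow_real, Complex.norm_real, Real.norm_of_nonneg (by positivity)]
  have e1 : ‖1 - z * t‖ ^ (-1/2:ℝ) = ‖1 - z * t‖ ^ (-1/4:ℝ) * ‖1 - z * t‖ ^ (-1/4:ℝ) := by
    rw [← Real.rpow_add hp]; norm_num
  have e2 : (1 - t) ^ (-3/4:ℝ) = (1-t) ^ (-1/2:ℝ) * (1-t)^ (-1/4:ℝ) := by
    rw [← Real.rpow_add h1]; norm_num
  have b1 : ‖1 - z * t‖ ^ (-1/4:ℝ) ≤ (1-t)^ (-1/4:ℝ) :=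
    Real.rpow_le_rpow_of_nonpos h1 d1 (by norm_num)
  have b2 : ‖1 - z * t‖ ^ (-1/4:ℝ) ≤ (‖1 - z‖/2)^(-1/4:ℝ) :=
    Real.rpow_le_rpow_of_nonpos (by positivity) d2 (by norm_num)
  rw [e1, e2]
  calc t ^ a * (1 - t) ^ (-1/2:ℝ) * (‖1 - z * t‖ ^ (-1/4:ℝ) * ‖1 - z * t‖ ^ (-1/4:ℝ))
      ≤ t ^ a * (1 - t) ^ (-1/2:ℝ) * ((1-t)^ (-1/4:ℝ) * (‖1 - z‖/2)^(-1/4:ℝ)) := by gcongr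
    _ = _ := by ring

theorem eulerU_meas (a : ℝ) (z : ℂ) : AEStronglyMeasurable
    (fun t : ℝ => ((t^a * (1-t)^(-1/2:ℝ) : ℝ) : ℂ) * (1 - z * t) ^ ((-1/2:ℝ):ℂ))
    (volume.restrict (Set.Ioo (0:ℝ) 1)) := by
  apply Measurable.aestronglyMeasurable
  fun_prop

theorem eulerU_integrable (a : ℝ) (ha : -1 < a) (z : ℂ) (hz : ‖z‖ ≤ 1) (hz1 : z ≠ 1) :
    IntegrableOn (fun t : ℝ => ((t^a * (1-t)^(-1/2:ℝ) : ℝ) : ℂ) * (1 - z * t) ^ ((-1/2:ℝ):ℂ))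
      (Set.Ioo (0:ℝ) 1) := by
  refine Integrable.mono' ((beta_integrable a (-3/4) ha (by norm_num)).const_mul ((‖1 - z‖/2)^(-1/4:ℝ)))
    (eulerU_meas a z) ?_
  rw [ae_restrict_iff' measurableSet_Ioo]
  exact Eventually.of_forall fun t ht => eulerU_integrand_bound a z hz hz1 t ht

theorem eulerU_bound (a : ℝ) (ha : -1 < a) : ∃ C : ℝ, 0 ≤ C ∧ ∀ z : ℂ, ‖z‖ ≤ 1 → z ≠ 1 →
    ‖eulerU a z‖ ≤ C * ‖1 - z‖^(-1/4:ℝ) := by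
  refine ⟨(1/2:ℝ)^(-1/4:ℝ) * ∫ t in Set.Ioo (0:ℝ) 1, t^a * (1-t)^(-3/4:ℝ), ?_, ?_⟩
  · apply mul_nonneg (by positivity)
    apply setIntegral_nonneg measurableSet_Ioo
    intro t ht
    have h0 := ht.1
    have h1 : 0 < 1 - t := by linarith [ht.2]
    positivity
  · intro z hz hz1
    have h := norm_integral_le_of_norm_le (f := fun t : ℝ => ((t^a * (1-t)^(-1/2:ℝ) : ℝ) : ℂ) * (1 - z * t) ^ ((-1/2:ℝ):ℂ))
      ((beta_integrable a (-3/4) ha (by norm_num)).const_mul ((‖1 - z‖/2)^(-1/4:ℝ)))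
      ((ae_restrict_iff' measurableSet_Ioo).2
        (Eventually.of_forall fun t ht => eulerU_integrand_bound a z hz hz1 t ht))
    refine h.trans (le_of_eq ?_)
    rw [MeasureTheory.integral_const_mul]
    have : (‖1 - z‖/2)^(-1/4:ℝ) = ‖1 - z‖^(-1/4:ℝ) * (1/2:ℝ)^(-1/4:ℝ) := by
      rw [← Real.mul_rpow (norm_nonneg _) (by norm_num)]
      congr 1; ring
    rw [this]; ring


theorem ne_one_of_norm_lt {w : ℂ} (h : ‖w‖ < 1) : w ≠ 1 := by
  rintro rfl; simp at h

theorem eulerU_diff (a : ℝ) (ha : -1 < a) (c : ℂ) (hc : ‖c‖ < 1) :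
    DifferentiableAt ℂ (eulerU a) c := by
  have hq : ∀ z ∈ Metric.ball c ((1 - ‖c‖)/2), ‖z‖ ≤ (1 + ‖c‖)/2 := by
    intro z hz
    rw [Metric.mem_ball, dist_eq_norm] at hz
    have : ‖z‖ ≤ ‖z - c‖ + ‖c‖ := by simpa using norm_add_le (z - c) c
    linarith
  refine holo_integral (μ := volume.restrict (Set.Ioo (0:ℝ) 1)) _ c ((1 - ‖c‖)/2) (by linarith)
    (fun t => (((1 - ‖c‖)/4))^(-1/4:ℝ) * (t^a * (1-t)^(-3/4:ℝ))) ?_ ?_ ?_ ?_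
  · intro z _
    exact eulerU_meas a z
  · rw [ae_restrict_iff' measurableSet_Ioo]
    refine Eventually.of_forall fun t ht => ?_
    intro z hz
    have hz' := hq z hz
    have hs : 1 - z * t ∈ Complex.slitPlane := by
      have : ‖z * t‖ < 1 := by
        rw [norm_mul, Complex.norm_real, Real.norm_of_nonneg ht.1.le]
        nlinarith [norm_nonneg z, ht.1, ht.2]
      exact slit_one_sub _ this.le (ne_one_of_norm_lt this)
    apply DifferentiableAt.differentiableWithinAt
    refine DifferentiableAt.const_mul ?_ _
    refine DifferentiableAt.cpow (by fun_prop) (by fun_prop) hs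
  · rw [ae_restrict_iff' measurableSet_Ioo]
    refine Eventually.of_forall fun t ht z hz => ?_
    have hz' := hq z hz
    have hz1 : ‖z‖ < 1 := by linarith
    refine (eulerU_integrand_bound a z hz1.le (ne_one_of_norm_lt hz1) t ht).trans ?_
    have h0 := ht.1
    have h1 : 0 < 1 - t := by linarith [ht.2]
    have h2 : (1 - ‖c‖)/4 ≤ ‖1 - z‖/2 := by
      have := norm_sub_norm_le (1:ℂ) z
      rw [norm_one] at this
      linarith
    have := Real.rpow_le_rpow_of_nonpos (z := (-1/4:ℝ)) (by linarith) h2 (by norm_num)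
    gcongr
  · exact (beta_integrable a (-3/4) ha (by norm_num)).const_mul _

theorem eulerU_tendsto (a : ℝ) (ha : -1 < a) (z : ℂ) (hz : ‖z‖ = 1) (hz1 : z ≠ 1) (r : ℕ → ℝ)
    (hr0 : ∀ n, 0 ≤ r n) (hr1 : ∀ n, r n < 1) (hr : Tendsto r atTop (𝓝 1)) :
    Tendsto (fun n => eulerU a (r n * z)) atTop (𝓝 (eulerU a z)) := by
  have hn : 0 < ‖1 - z‖ := norm_pos_iff.2 (sub_ne_zero.2 (Ne.symm hz1))
  refine tendsto_integral_of_dominated_convergence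
    (fun t => (‖1 - z‖/4)^(-1/4:ℝ) * (t^a * (1-t)^(-3/4:ℝ))) ?_ ?_ ?_ ?_
  · intro n; exact eulerU_meas a _
  · exact (beta_integrable a (-3/4) ha (by norm_num)).const_mul _
  · intro n
    rw [ae_restrict_iff' measurableSet_Ioo]
    refine Eventually.of_forall fun t ht => ?_
    have hz2 : ‖(r n : ℂ) * z‖ < 1 := by
      rw [norm_mul, Complex.norm_real, Real.norm_of_nonneg (hr0 n), hz, mul_one]; exact hr1 n
    refine (eulerU_integrand_bound a _ hz2.le (ne_one_of_norm_lt hz2) t ht).trans ?_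
    have h0 := ht.1
    have h1 : 0 < 1 - t := by linarith [ht.2]
    have h2 : ‖1 - z‖/4 ≤ ‖1 - r n * z‖/2 := by
      have := den_ge2 z hz.le (r n) (hr0 n) (hr1 n).le
      rw [mul_comm z] at this
      linarith
    have := Real.rpow_le_rpow_of_nonpos (z := (-1/4:ℝ)) (by linarith) h2 (by norm_num)
    gcongr
  · rw [ae_restrict_iff' measurableSet_Ioo]
    refine Eventually.of_forall fun t ht => ?_
    have hs : 1 - z * t ∈ Complex.slitPlane := by
      have : ‖z * t‖ < 1 := by
        rw [norm_mul, Complex.norm_real, Real.norm_of_nonneg ht.1.le, hz, one_mul]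
        exact ht.2
      exact slit_one_sub _ this.le (ne_one_of_norm_lt this)
    refine Tendsto.const_mul _ ?_
    have hb : Tendsto (fun n => 1 - (r n : ℂ) * z * t) atTop (𝓝 (1 - z * t)) := by
      have h3 : Tendsto (fun n => (r n : ℂ)) atTop (𝓝 1) := by
        have h3 := (Complex.continuous_ofReal.tendsto 1).comp hr
        rw [Complex.ofReal_one] at h3
        exact h3
      have := ((h3.mul_const z).mul_const (t:ℂ)).const_sub 1
      simpa using this
    exact hb.cpow tendsto_const_nhds hs

theorem circle_bound (a b : ℝ) (ha : -1 < a) (hb : -1 < b) : ∃ C : ℝ, ∀ z : ℂ, ‖z‖ ≤ 1 → z ≠ 1 →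
    ‖(z^2 - 1) * (eulerU a z * eulerU b z)^2‖ ≤ C := by
  obtain ⟨A, hA0, hA⟩ := eulerU_bound a ha
  obtain ⟨B, hB0, hB⟩ := eulerU_bound b hb
  refine ⟨2 * (A * B)^2, fun z hz hz1 => ?_⟩
  have hn : 0 < ‖1 - z‖ := norm_pos_iff.2 (sub_ne_zero.2 (Ne.symm hz1))
  have h1 : ‖z^2 - 1‖ ≤ 2 * ‖1 - z‖ := by
    have : z^2 - 1 = -(1 + z) * (1 - z) := by ring
    rw [this, norm_mul, norm_neg]
    have : ‖1 + z‖ ≤ 2 := by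
      have := norm_add_le (1:ℂ) z
      rw [norm_one] at this; linarith
    gcongr
  rw [norm_mul, norm_pow, norm_mul]
  calc ‖z^2 - 1‖ * (‖eulerU a z‖ * ‖eulerU b z‖)^2
      ≤ (2 * ‖1 - z‖) * ((A * ‖1 - z‖^(-1/4:ℝ)) * (B * ‖1 - z‖^(-1/4:ℝ)))^2 := by
        gcongr
        · exact hA z hz hz1
        · exact hB z hz hz1
    _ = 2 * (A * B)^2 * (‖1 - z‖ * (‖1 - z‖^(-1/4:ℝ))^4) := by ring
    _ = 2 * (A * B)^2 := by
        rw [← Real.rpow_natCast (‖1 - z‖^(-1/4:ℝ)) 4, ← Real.rpow_mul hn.le]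
        norm_num
        rw [Real.rpow_neg_one, mul_inv_cancel₀ hn.ne', mul_one]

theorem circle_mean (a b : ℝ) (ha : -1 < a) (hb : -1 < b) :
    ∫ φ in (0:ℝ)..(2*π), ((Complex.exp (φ * Complex.I))^2 - 1) *
      (eulerU a (Complex.exp (φ * Complex.I)) * eulerU b (Complex.exp (φ * Complex.I)))^2
    = -(2 * π) * (eulerU a 0 * eulerU b 0)^2 := by
  obtain ⟨C, hC⟩ := circle_bound a b ha hb
  set F : ℂ → ℂ := fun z => (z^2 - 1) * (eulerU a z * eulerU b z)^2 with hF
  have hdiff : ∀ z : ℂ, ‖z‖ < 1 → DifferentiableAt ℂ F z := by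
    intro z hz
    have h1 := eulerU_diff a ha z hz
    have h2 := eulerU_diff b hb z hz
    exact ((differentiableAt_id.pow 2).sub_const 1).mul ((h1.mul h2).pow 2)
  set r : ℕ → ℝ := fun n => 1 - 1 / ((n:ℝ) + 1) with hr
  have hr0 : ∀ n, 0 ≤ r n := by
    intro n
    have : 1 / ((n:ℝ) + 1) ≤ 1 := by
      rw [div_le_one (by positivity)]; linarith [(Nat.cast_nonneg n : (0:ℝ) ≤ n)]
    simp only [hr]; linarith
  have hr1 : ∀ n, r n < 1 := by
    intro n
    have : 0 < 1 / ((n:ℝ) + 1) := by positivity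
    simp only [hr]; linarith
  have hrt : Tendsto r atTop (𝓝 1) := by
    simpa [hr] using (tendsto_one_div_add_atTop_nhds_zero_nat (𝕜 := ℝ)).const_sub 1
  have hmean : ∀ n, ∫ φ in (0:ℝ)..(2*π), F (r n * Complex.exp (φ * Complex.I)) = (2*π) * F 0 := by
    intro n
    have h := DiffContOnCl.circleAverage (f := F) (c := 0) (R := r n) ?_
    · rw [Real.circleAverage_def] at h
      simp only [circleMap, zero_add] at h
      rw [← h, Complex.real_smul]
      push_cast
      have : (π:ℂ) ≠ 0 := by exact_mod_cast Real.pi_ne_zero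
      rw [← mul_assoc, mul_inv_cancel₀ (mul_ne_zero two_ne_zero this), one_mul]
    · apply DifferentiableOn.diffContOnCl
      intro z hz
      apply DifferentiableAt.differentiableWithinAt
      apply hdiff
      have := Metric.closure_ball_subset_closedBall hz
      rw [mem_closedBall_zero_iff, abs_of_nonneg (hr0 n)] at this
      exact this.trans_lt (hr1 n)
  have hnorm : ∀ φ : ℝ, ‖Complex.exp (φ * Complex.I)‖ = 1 := Complex.norm_exp_ofReal_mul_I
  have hlt : ∀ n (φ : ℝ), ‖(r n : ℂ) * Complex.exp (φ * Complex.I)‖ < 1 := by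
    intro n φ
    rw [norm_mul, hnorm, Complex.norm_real, Real.norm_of_nonneg (hr0 n), mul_one]; exact hr1 n
  have hlim : Tendsto (fun n => ∫ φ in (0:ℝ)..(2*π), F (r n * Complex.exp (φ * Complex.I))) atTop
      (𝓝 (∫ φ in (0:ℝ)..(2*π), F (Complex.exp (φ * Complex.I)))) := by
    refine intervalIntegral.tendsto_integral_filter_of_dominated_convergence (fun _ => C) ?_ ?_ ?_ ?_
    · refine Eventually.of_forall fun n => ?_
      apply Continuous.aestronglyMeasurable
      rw [continuous_iff_continuousAt]
      intro φ
      have := (hdiff _ (hlt n φ)).continuousAt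
      exact ContinuousAt.comp (f := fun φ : ℝ => (r n : ℂ) * Complex.exp (φ * Complex.I)) this (by fun_prop)
    · refine Eventually.of_forall fun n => Eventually.of_forall fun φ _ => ?_
      exact hC _ (hlt n φ).le (ne_one_of_norm_lt (hlt n φ))
    · simp
    · have h2 : ∀ᵐ φ : ℝ, φ ≠ 2 * π := by
        simp [ae_iff, measure_singleton]
      filter_upwards [h2] with φ hφ hmem
      rw [Set.uIoc_of_le (by positivity)] at hmem
      have hz1 : Complex.exp (φ * Complex.I) ≠ 1 := by
        intro h
        rw [Complex.exp_eq_one_iff] at h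
        obtain ⟨k, hk⟩ := h
        have h3 : φ = k * (2 * π) := by
          have := congrArg Complex.im hk
          simpa using this
        have hk0 : 0 < (k:ℝ) := by
          by_contra hcon
          push Not at hcon
          nlinarith [hmem.1, Real.pi_pos]
        have hk1 : (k:ℝ) < 1 := by
          by_contra hcon
          push Not at hcon
          have : φ < 2 * π := lt_of_le_of_ne hmem.2 hφ
          nlinarith [Real.pi_pos]
        have e0 : 0 < k := by exact_mod_cast hk0
        have e1 : k < 1 := by exact_mod_cast hk1
        omega
      have t1 := eulerU_tendsto a ha _ (hnorm φ) hz1 r hr0 hr1 hrt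
      have t2 := eulerU_tendsto b hb _ (hnorm φ) hz1 r hr0 hr1 hrt
      have t0 : Tendsto (fun n => (r n : ℂ) * Complex.exp (φ * Complex.I)) atTop (𝓝 (Complex.exp (φ * Complex.I))) := by
        have h3 := (Complex.continuous_ofReal.tendsto 1).comp hrt
        rw [Complex.ofReal_one] at h3
        simpa using h3.mul_const (Complex.exp (φ * Complex.I))
      exact ((t0.pow 2).sub_const 1).mul ((t1.mul t2).pow 2)
  have := tendsto_nhds_unique hlim (by simp only [hmean]; exact tendsto_const_nhds)
  rw [this]
  simp [hF]

theorem eulerU_zero (a : ℝ) (ha : -1 < a) :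
    eulerU a 0 = Complex.Gamma (a+1) * Complex.Gamma (1/2) / Complex.Gamma (a + 3/2) := by
  have h := Complex.Gamma_mul_Gamma_eq_betaIntegral (s := ((a+1:ℝ):ℂ)) (t := ((1/2:ℝ):ℂ))
    (by simp; linarith) (by simp)
  have hg : Complex.Gamma (a + 3/2) ≠ 0 := by
    apply Complex.Gamma_ne_zero_of_re_pos
    simp; linarith
  have e : ((a+1:ℝ):ℂ) + ((1/2:ℝ):ℂ) = a + 3/2 := by push_cast; ring
  rw [e] at h
  have hb : eulerU a 0 = Complex.betaIntegral ((a+1:ℝ):ℂ) ((1/2:ℝ):ℂ) := by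
    unfold eulerU Complex.betaIntegral
    rw [intervalIntegral.integral_of_le zero_le_one, integral_Ioc_eq_integral_Ioo]
    refine setIntegral_congr_fun measurableSet_Ioo fun t ht => ?_
    have h1 : (0:ℝ) ≤ 1 - t := by linarith [ht.2]
    have e1 : ((a+1:ℝ):ℂ) - 1 = (a:ℂ) := by push_cast; ring
    have e2 : ((1/2:ℝ):ℂ) - 1 = ((-1/2:ℝ):ℂ) := by push_cast; ring
    have e3 : (1:ℂ) - (t:ℂ) = ((1-t:ℝ):ℂ) := by push_cast; ring
    rw [e1, e2, e3, zero_mul, sub_zero, Complex.one_cpow, mul_one, ← Complex.ofReal_cpow ht.1.le,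
      ← Complex.ofReal_cpow h1]
    push_cast
    rfl
  rw [hb, eq_div_iff hg, mul_comm, ← h]
  push_cast
  ring

theorem euler_prod (a : ℝ) (ha : -1 < a) (ha0 : a < 0) (ha2 : a ≠ -1/2) :
    eulerU a 0 * eulerU (-a-1) 0 * Complex.sin (a * π) * (2 * a + 1) = -(2 * π) * Complex.cos (a * π) := by
  rw [eulerU_zero a ha, eulerU_zero (-a-1) (by linarith)]
  have r1 := Complex.Gamma_mul_Gamma_one_sub ((a:ℂ)+1)
  have r2 := Complex.Gamma_mul_Gamma_one_sub ((a:ℂ)+1/2)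
  have r3 := Complex.Gamma_add_one ((a:ℂ)+1/2) (by
    intro h
    have := congrArg Complex.re h
    simp at this
    apply ha2; linarith)
  have hh := Complex.Gamma_mul_Gamma_one_sub (1/2:ℂ)
  have hs : Complex.sin (a * π) ≠ 0 := by
    have : Real.sin (a * π) < 0 := by
      apply Real.sin_neg_of_neg_of_neg_pi_lt
      · nlinarith [Real.pi_pos]
      · nlinarith [Real.pi_pos]
    exact_mod_cast this.ne
  have s1 : Complex.sin (π * ((a:ℂ)+1)) = - Complex.sin (a * π) := by
    rw [show (π:ℂ) * ((a:ℂ)+1) = a * π + π by ring, Complex.sin_add_pi]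
  have s2 : Complex.sin (π * ((a:ℂ)+1/2)) = Complex.cos (a * π) := by
    rw [show (π:ℂ) * ((a:ℂ)+1/2) = a * π + π/2 by ring, Complex.sin_add_pi_div_two]
  have s3 : Complex.sin (π * (1/2)) = 1 := by
    rw [show (π:ℂ) * (1/2) = π/2 by ring, Complex.sin_pi_div_two]
  rw [s1] at r1
  rw [s2] at r2
  rw [s3, show (1:ℂ) - 1/2 = 1/2 by ring] at hh
  rw [show (1:ℂ) - (a + 1) = -a by ring] at r1
  rw [show (1:ℂ) - (a + 1/2) = 1/2 - a by ring] at r2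
  rw [show (a:ℂ) + 1/2 + 1 = a + 3/2 by ring] at r3
  rw [show (((-a-1:ℝ):ℂ)+1) = -a by push_cast; ring, show (((-a-1:ℝ):ℂ)+3/2) = 1/2 - a by push_cast; ring, r3]
  have hc : Complex.cos (a * π) ≠ 0 := by
    intro h0
    rw [h0, div_zero] at r2
    rcases mul_eq_zero.1 r2 with h | h
    · have g : Complex.Gamma ((a:ℂ) + 3/2) ≠ 0 := by
        apply Complex.Gamma_ne_zero_of_re_pos
        simp; linarith
      rw [r3, h, mul_zero] at g
      exact g rfl
    · refine Complex.Gamma_ne_zero_of_re_pos ?_ h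
      simp; linarith
  have hg1 : Complex.Gamma ((a:ℂ)+1/2) ≠ 0 := by
    intro h; rw [h, zero_mul] at r2
    have : (π:ℂ) ≠ 0 := by exact_mod_cast Real.pi_ne_zero
    exact div_ne_zero this hc r2.symm
  have hg2 : Complex.Gamma (1/2 - (a:ℂ)) ≠ 0 := by
    refine Complex.Gamma_ne_zero_of_re_pos ?_
    simp; linarith
  have ha3 : (a:ℂ) + 1/2 ≠ 0 := by
    intro h
    have := congrArg Complex.re h
    simp at this
    apply ha2; linarith
  have ha4 : (a:ℂ) * 2 + 1 ≠ 0 := by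
    intro h; apply ha3; linear_combination h/2
  rw [div_one] at hh
  rw [eq_div_iff hc] at r2
  rw [div_neg, eq_neg_iff_add_eq_zero] at r1
  field_simp at r1
  have hden : ((a:ℂ) + 1/2) * Complex.Gamma ((a:ℂ)+1/2) * Complex.Gamma (1/2 - (a:ℂ)) ≠ 0 := by
    exact mul_ne_zero (mul_ne_zero ha3 hg1) hg2
  have key : Complex.Gamma ((a:ℂ)+1) * Complex.Gamma (-a) * Complex.sin (a * π) = -π := by
    linear_combination r1
  rw [show Complex.Gamma (↑a + 1) * Complex.Gamma (1 / 2) / ((↑a + 1 / 2) * Complex.Gamma (↑a + 1 / 2)) *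
        (Complex.Gamma (-↑a) * Complex.Gamma (1 / 2) / Complex.Gamma (1 / 2 - ↑a)) *
      Complex.sin (↑a * ↑π) * (2 * ↑a + 1) = (Complex.Gamma ((a:ℂ)+1) * Complex.Gamma (-a) * Complex.sin (a * π)) *
      (Complex.Gamma (1 / 2) * Complex.Gamma (1 / 2)) * (2 * a + 1) / (((a:ℂ) + 1/2) * Complex.Gamma ((a:ℂ)+1/2) * Complex.Gamma (1/2 - (a:ℂ))) by
      field_simp, key, hh, div_eq_iff hden]
  linear_combination (π + 2 * π * (a:ℂ)) * r2


theorem cpow_polar (r α : ℝ) (hr : 0 < r) (h1 : -π < α) (h2 : α ≤ π) :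
    ((r:ℂ) * Complex.exp (α * Complex.I)) ^ ((-1/2:ℝ):ℂ)
      = ((r^(-1/2:ℝ) : ℝ) : ℂ) * Complex.exp (-(α/2) * Complex.I) := by
  have hne : (r:ℂ) * Complex.exp (α * Complex.I) ≠ 0 :=
    mul_ne_zero (by exact_mod_cast hr.ne') (Complex.exp_ne_zero _)
  have hr' : (r:ℂ) = Complex.exp (Real.log r : ℂ) := by
    rw [← Complex.ofReal_exp, Real.exp_log hr]
  have hrp : ((r^(-1/2:ℝ) : ℝ) : ℂ) = Complex.exp (Real.log r * (-1/2)) := by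
    rw [Real.rpow_def_of_pos hr]; push_cast; rfl
  rw [Complex.cpow_def_of_ne_zero hne, Complex.log_ofReal_mul hr (Complex.exp_ne_zero _),
    Complex.log_exp (by simpa using h1) (by simpa using h2), hrp, ← Complex.exp_add]
  congr 1
  push_cast
  ring

theorem one_sub_exp_pos (φ : ℝ) : 1 - Complex.exp (φ * Complex.I) =
    ((2 * Real.sin (φ/2) : ℝ) : ℂ) * Complex.exp (((φ - π)/2 : ℝ) * Complex.I) := by
  have e1 : Complex.exp (((φ - π)/2 : ℝ) * Complex.I) = Complex.exp ((φ/2:ℝ) * Complex.I) * (-Complex.I) := by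
    rw [show (((φ - π)/2 : ℝ) : ℂ) * Complex.I = (φ/2:ℝ) * Complex.I + (-(π/2)) * Complex.I by push_cast; ring,
      Complex.exp_add]
    congr 1
    rw [neg_mul, Complex.exp_neg, Complex.exp_pi_div_two_mul_I]
    simp
  have e2 : Complex.exp (φ * Complex.I) = Complex.exp ((φ/2:ℝ) * Complex.I) * Complex.exp ((φ/2:ℝ) * Complex.I) := by
    rw [← Complex.exp_add]; congr 1; push_cast; ring
  have hcs := Complex.cos_sq_add_sin_sq ((φ/2:ℝ):ℂ)
  rw [e1, e2, Complex.exp_mul_I]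
  push_cast at hcs ⊢
  have hI := Complex.I_sq
  linear_combination (-hcs) + (-Complex.sin ((φ:ℂ)/2)^2 + 2 * Complex.sin ((φ:ℂ)/2)^2) * hI

theorem one_sub_exp_neg (φ : ℝ) : 1 - Complex.exp (φ * Complex.I) =
    ((2 * Real.sin (-φ/2) : ℝ) : ℂ) * Complex.exp (((φ + π)/2 : ℝ) * Complex.I) := by
  rw [one_sub_exp_pos]
  rw [show (((φ + π)/2 : ℝ) : ℂ) * Complex.I = (((φ - π)/2 : ℝ) : ℂ) * Complex.I + π * Complex.I by push_cast; ring,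
    Complex.exp_add, Complex.exp_pi_mul_I, neg_div, Real.sin_neg]
  push_cast
  ring

noncomputable def kk (θ : ℝ) (ζ : ℂ) : ℂ :=
  (1 - Complex.exp (ζ + θ * Complex.I)) ^ ((-1/2:ℝ):ℂ) * (1 - Complex.exp (ζ - θ * Complex.I)) ^ ((-1/2:ℝ):ℂ)

theorem kk_neg (θ : ℝ) (ζ : ℂ) : kk (-θ) ζ = kk θ ζ := by
  unfold kk
  rw [mul_comm]
  simp [sub_eq_add_neg]

theorem cos_sub_cos_eq (θ y : ℝ) :
    (2 * Real.sin ((y + θ)/2)) * (2 * Real.sin ((θ - y)/2)) = 2 * (Real.cos y - Real.cos θ) := by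
  rw [Real.cos_sub_cos]
  rw [show (y - θ)/2 = -((θ-y)/2) by ring, Real.sin_neg]
  ring

theorem kk_arc (θ y : ℝ) (hθ : θ < π) (h1 : -θ < y) (h2 : y < θ) :
    kk θ (y * Complex.I) = Complex.exp (-(y/2) * Complex.I) / ((Real.sqrt (2 * (Real.cos y - Real.cos θ)) : ℝ) : ℂ) := by
  unfold kk
  rw [show (y:ℂ) * Complex.I + θ * Complex.I = ((y + θ : ℝ) : ℂ) * Complex.I by push_cast; ring,
    show (y:ℂ) * Complex.I - θ * Complex.I = ((y - θ : ℝ) : ℂ) * Complex.I by push_cast; ring,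
    one_sub_exp_pos (y + θ), one_sub_exp_neg (y - θ)]
  have s1 : 0 < Real.sin ((y + θ)/2) := Real.sin_pos_of_pos_of_lt_pi (by linarith) (by linarith)
  have s2 : 0 < Real.sin ((θ - y)/2) := Real.sin_pos_of_pos_of_lt_pi (by linarith) (by linarith)
  rw [show -(y - θ)/2 = (θ - y)/2 by ring]
  rw [cpow_polar _ _ (by positivity) (by linarith) (by linarith), cpow_polar _ _ (by positivity) (by linarith) (by linarith)]
  rw [← cos_sub_cos_eq, Real.sqrt_eq_rpow, div_eq_mul_inv (Complex.exp (-((y:ℂ)/2) * Complex.I)), ← Complex.ofReal_inv, ← Real.rpow_neg (by positivity),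
    Real.mul_rpow (x := 2 * Real.sin ((y + θ)/2)) (y := 2 * Real.sin ((θ - y)/2)) (by positivity) (by positivity)]
  rw [show (-(1/2:ℝ)) = -1/2 by norm_num]
  rw [show Complex.exp (-((y:ℂ)/2) * Complex.I) = Complex.exp (-((((y+θ-π)/2:ℝ):ℂ)/2) * Complex.I) *
    Complex.exp (-((((y-θ+π)/2:ℝ):ℂ)/2) * Complex.I) by
      rw [← Complex.exp_add]; congr 1; push_cast; ring]
  push_cast
  ring

theorem arc_integrable (θ : ℝ) (h0 : 0 < θ) (hθ : θ < π) :
    IntegrableOn (fun y : ℝ => (Real.sqrt (2 * (Real.cos y - Real.cos θ)))⁻¹) (Set.Ioo (-θ) θ) := by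
  set m := Real.sin θ / θ with hm
  have hs : 0 < Real.sin θ := Real.sin_pos_of_pos_of_lt_pi h0 hθ
  have hm0 : 0 < m := by positivity
  have hsin : ∀ x, 0 ≤ x → x ≤ θ → m * x ≤ Real.sin x := by
    intro x hx0 hx1
    have hc := strictConcaveOn_sin_Icc.concaveOn.2 (show θ ∈ Set.Icc 0 π from ⟨h0.le, hθ.le⟩) (show (0:ℝ) ∈ Set.Icc 0 π from ⟨le_rfl, Real.pi_pos.le⟩)
      (show 0 ≤ x/θ by positivity) (show 0 ≤ 1 - x/θ by rw [sub_nonneg, div_le_one h0]; exact hx1) (by ring)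
    simp only [smul_eq_mul, Real.sin_zero, mul_zero, add_zero] at hc
    rw [div_mul_cancel₀ _ h0.ne'] at hc
    calc m * x = x / θ * Real.sin θ := by rw [hm]; ring
      _ ≤ _ := hc
  have hIntegr : IntegrableOn (fun y : ℝ => (m * Real.sqrt θ)⁻¹ * ((y + θ)^(-1/2:ℝ) + (θ - y)^(-1/2:ℝ))) (Set.Ioo (-θ) θ) := by
    have i0 : IntervalIntegrable (fun y : ℝ => y^(-1/2:ℝ)) volume 0 (2*θ) :=
      intervalIntegral.intervalIntegrable_rpow' (by norm_num)
    have i1 := i0.comp_add_right θ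
    have i2 := (i0.comp_sub_left θ).symm
    rw [show (0:ℝ) - θ = -θ by ring, show 2 * θ - θ = θ by ring] at i1
    rw [show θ - 0 = θ by ring, show θ - 2*θ = -θ by ring] at i2
    rw [intervalIntegrable_iff_integrableOn_Ioo_of_le (by linarith)] at i1 i2
    exact (Integrable.add i1 i2).const_mul _
  refine Integrable.mono' hIntegr ?_ ?_
  · apply Measurable.aestronglyMeasurable
    fun_prop
  · rw [ae_restrict_iff' measurableSet_Ioo]
    refine Eventually.of_forall fun y hy => ?_
    have p0 : 0 < y + θ := by linarith [hy.1]
    have q0 : 0 < θ - y := by linarith [hy.2]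
    have b1 := hsin ((y+θ)/2) (by linarith) (by linarith [hy.2])
    have b2 := hsin ((θ-y)/2) (by linarith) (by linarith [hy.1])
    rw [Real.norm_of_nonneg (by positivity), ← cos_sub_cos_eq]
    have hle : m^2 * ((y+θ) * (θ - y)) ≤ (2 * Real.sin ((y + θ)/2)) * (2 * Real.sin ((θ - y)/2)) := by
      have c1 : m * (y+θ) ≤ 2 * Real.sin ((y + θ)/2) := by linarith
      have c2 : m * (θ-y) ≤ 2 * Real.sin ((θ - y)/2) := by linarith
      calc m^2 * ((y+θ) * (θ - y)) = (m * (y+θ)) * (m * (θ-y)) := by ring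
        _ ≤ _ := by
          have : 0 ≤ 2 * Real.sin ((y + θ)/2) := le_trans (by positivity) c1
          gcongr
    have e1 : (y+θ)^(-1/2:ℝ) = (Real.sqrt (y+θ))⁻¹ := by
      rw [Real.sqrt_eq_rpow, ← Real.rpow_neg p0.le]; norm_num
    have e2 : (θ-y)^(-1/2:ℝ) = (Real.sqrt (θ-y))⁻¹ := by
      rw [Real.sqrt_eq_rpow, ← Real.rpow_neg q0.le]; norm_num
    have hsq : 0 < Real.sqrt (m^2 * ((y+θ) * (θ - y))) := Real.sqrt_pos.2 (by positivity)
    calc (Real.sqrt ((2 * Real.sin ((y + θ)/2)) * (2 * Real.sin ((θ - y)/2))))⁻¹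
        ≤ (Real.sqrt (m^2 * ((y+θ) * (θ - y))))⁻¹ := by
          apply inv_anti₀ hsq
          exact Real.sqrt_le_sqrt hle
      _ = m⁻¹ * ((Real.sqrt (y+θ))⁻¹ * (Real.sqrt (θ-y))⁻¹) := by
          rw [Real.sqrt_mul (by positivity), Real.sqrt_sq hm0.le, Real.sqrt_mul p0.le, mul_inv, mul_inv]
      _ ≤ m⁻¹ * ((Real.sqrt θ)⁻¹ * ((Real.sqrt (y+θ))⁻¹ + (Real.sqrt (θ-y))⁻¹)) := by
          apply mul_le_mul_of_nonneg_left _ (by positivity)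
          have sθ : 0 < Real.sqrt θ := Real.sqrt_pos.2 h0
          have sp : 0 < (Real.sqrt (y+θ))⁻¹ := inv_pos.2 (Real.sqrt_pos.2 p0)
          have sq : 0 < (Real.sqrt (θ-y))⁻¹ := inv_pos.2 (Real.sqrt_pos.2 q0)
          have sθ' : 0 < (Real.sqrt θ)⁻¹ := inv_pos.2 sθ
          rcases le_total 0 y with h | h
          · have : (Real.sqrt (y+θ))⁻¹ ≤ (Real.sqrt θ)⁻¹ := inv_anti₀ sθ (Real.sqrt_le_sqrt (by linarith))
            nlinarith [mul_pos sθ' sp]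
          · have : (Real.sqrt (θ-y))⁻¹ ≤ (Real.sqrt θ)⁻¹ := inv_anti₀ sθ (Real.sqrt_le_sqrt (by linarith))
            nlinarith [mul_pos sθ' sq]
      _ = _ := by rw [e1, e2, mul_inv]; ring

/-- The integrand in the logarithmic variable. -/
noncomputable def ff (a θ : ℝ) (ζ : ℂ) : ℂ := Complex.exp ((a + 1) * ζ) * kk θ ζ

theorem ff_diff (a θ : ℝ) (ζ : ℂ) (hζ : ζ.re < 0) : DifferentiableAt ℂ (ff a θ) ζ := by
  have h : ∀ w : ℂ, w.re = ζ.re → 1 - Complex.exp w ∈ Complex.slitPlane := by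
    intro w hw
    have : ‖Complex.exp w‖ < 1 := by
      rw [Complex.norm_exp, hw]; simpa using hζ
    exact slit_one_sub _ this.le (ne_one_of_norm_lt this)
  unfold ff kk
  refine DifferentiableAt.mul (by fun_prop) (DifferentiableAt.mul ?_ ?_)
  · exact DifferentiableAt.cpow (by fun_prop) (by fun_prop) (h _ (by simp))
  · exact DifferentiableAt.cpow (by fun_prop) (by fun_prop) (h _ (by simp))

theorem ff_radial (a σ x : ℝ) (hx : x < 0) : ff a σ (x + σ * Complex.I) =
    Complex.exp ((a+1) * σ * Complex.I) * ((Real.exp x : ℂ) *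
      ((((Real.exp x)^a * (1-(Real.exp x))^(-1/2:ℝ) : ℝ) : ℂ) *
        (1 - Complex.exp (((2*σ:ℝ):ℂ) * Complex.I) * (Real.exp x : ℝ)) ^ ((-1/2:ℝ):ℂ))) := by
  have h1 : 0 ≤ 1 - Real.exp x := by
    have : Real.exp x < 1 := by simpa using hx
    linarith
  unfold ff kk
  rw [show (x:ℂ) + σ * Complex.I + σ * Complex.I = ((2*σ:ℝ):ℂ) * Complex.I + x by push_cast; ring,
    show (x:ℂ) + σ * Complex.I - σ * Complex.I = x by ring, Complex.exp_add,
    show ((a:ℂ)+1) * (x + σ * Complex.I) = (a+1) * σ * Complex.I + (x + x * a) by ring,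
    Complex.exp_add, Complex.exp_add (x:ℂ), ← Real.exp_mul,
    Complex.ofReal_mul (Real.exp (x * a)), Complex.ofReal_cpow h1]
  push_cast
  ring

theorem ff_radial_integrable (a σ : ℝ) (ha : -1 < a) (hσ : Complex.exp (((2*σ:ℝ):ℂ) * Complex.I) ≠ 1) :
    IntegrableOn (fun x : ℝ => ff a σ (x + σ * Complex.I)) (Set.Iio 0) := by
  have h := (exp_cov_int _).1 (eulerU_integrable a ha (Complex.exp (((2*σ:ℝ):ℂ) * Complex.I))
    (Complex.norm_exp_ofReal_mul_I _).le hσ)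
  refine IntegrableOn.congr_fun (Integrable.const_mul h (Complex.exp ((a+1) * σ * Complex.I))) ?_ measurableSet_Iio
  intro x hx
  exact (ff_radial a σ x hx).symm

noncomputable def RR (a σ : ℝ) : ℂ :=
  Complex.exp ((a+1) * σ * Complex.I) * eulerU a (Complex.exp (((2*σ:ℝ):ℂ) * Complex.I))

theorem ff_radial_integral (a σ : ℝ) :
    ∫ x in Set.Iio (0:ℝ), ff a σ (x + σ * Complex.I) = RR a σ := by
  unfold RR eulerU
  rw [exp_cov, ← MeasureTheory.integral_const_mul]
  refine setIntegral_congr_fun measurableSet_Iio fun x hx => ?_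
  exact ff_radial a σ x hx

theorem tendsto_Iio (h : ℝ → ℂ) (hh : IntegrableOn h (Set.Iio 0)) :
    Tendsto (fun n : ℕ => ∫ x in (-((n:ℝ)+1))..(-(1/((n:ℝ)+1))), h x) atTop (𝓝 (∫ x in Set.Iio 0, h x)) := by
  have hU : (⋃ n : ℕ, Set.Ioc (-((n:ℝ)+1)) (-(1/((n:ℝ)+1)))) = Set.Iio 0 := by
    ext x
    simp only [Set.mem_iUnion, Set.mem_Ioc, Set.mem_Iio]
    constructor
    · rintro ⟨n, _, h2⟩
      have : 0 < 1/((n:ℝ)+1) := by positivity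
      linarith
    · intro hx
      obtain ⟨n, hn⟩ := exists_nat_gt (max (-x) (1/(-x)))
      have g1 := (le_max_left (-x) (1/(-x))).trans_lt hn
      have g2 := (le_max_right (-x) (1/(-x))).trans_lt hn
      refine ⟨n, by linarith, ?_⟩
      have : 1/((n:ℝ)+1) ≤ -x := by
        rw [div_le_iff₀ (by positivity)]
        rw [div_lt_iff₀ (by linarith)] at g2
        nlinarith
      linarith
  have hle : ∀ n : ℕ, (-((n:ℝ)+1)) ≤ (-(1/((n:ℝ)+1))) := by
    intro n
    have : 1/((n:ℝ)+1) ≤ 1 := by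
      rw [div_le_one (by positivity)]; linarith [(Nat.cast_nonneg n : (0:ℝ) ≤ n)]
    linarith [(Nat.cast_nonneg n : (0:ℝ) ≤ n)]
  have := tendsto_setIntegral_of_monotone (s := fun n : ℕ => Set.Ioc (-((n:ℝ)+1)) (-(1/((n:ℝ)+1)))) (f := h) (μ := volume)
    (fun n => measurableSet_Ioc) ?_ (by rw [hU]; exact hh)
  · rw [hU] at this
    refine this.congr fun n => ?_
    rw [intervalIntegral.integral_of_le (hle n)]
  · intro n m hnm
    have : (n:ℝ) ≤ m := by exact_mod_cast hnm
    apply Set.Ioc_subset_Ioc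
    · linarith
    · have : 1/((m:ℝ)+1) ≤ 1/((n:ℝ)+1) := one_div_le_one_div_of_le (by positivity) (by linarith)
      linarith


theorem exp_two_ne_one (θ : ℝ) (h0 : 0 < θ) (hθ : θ < π) :
    Complex.exp (((2*θ:ℝ):ℂ) * Complex.I) ≠ 1 := by
  intro h
  have h1 := one_sub_exp_pos (2*θ)
  rw [h, sub_self, eq_comm] at h1
  rcases mul_eq_zero.1 h1 with h2 | h2
  · rw [show 2 * θ / 2 = θ by ring] at h2
    have : 2 * Real.sin θ = 0 := by exact_mod_cast h2
    linarith [Real.sin_pos_of_pos_of_lt_pi h0 hθ]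
  · exact Complex.exp_ne_zero _ h2

theorem exp_neg_two_ne_one (θ : ℝ) (h0 : 0 < θ) (hθ : θ < π) :
    Complex.exp (((2*(-θ):ℝ):ℂ) * Complex.I) ≠ 1 := by
  intro h
  apply exp_two_ne_one θ h0 hθ
  have : ((2*(-θ):ℝ):ℂ) * Complex.I = -(((2*θ:ℝ):ℂ) * Complex.I) := by push_cast; ring
  rw [this, Complex.exp_neg, inv_eq_one] at h
  exact h

theorem norm_one_sub_exp (θ : ℝ) (h0 : 0 < θ) (hθ : θ < π) :
    ‖1 - Complex.exp (((2*θ:ℝ):ℂ) * Complex.I)‖ = 2 * Real.sin θ := by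
  rw [one_sub_exp_pos, norm_mul, Complex.norm_exp_ofReal_mul_I, Complex.norm_real, mul_one,
    show 2 * θ / 2 = θ by ring, Real.norm_of_nonneg]
  linarith [Real.sin_pos_of_pos_of_lt_pi h0 hθ]

theorem norm_one_sub_exp_neg (θ : ℝ) (h0 : 0 < θ) (hθ : θ < π) :
    ‖1 - Complex.exp (((2*(-θ):ℝ):ℂ) * Complex.I)‖ = 2 * Real.sin θ := by
  rw [one_sub_exp_neg, norm_mul, Complex.norm_exp_ofReal_mul_I, Complex.norm_real, mul_one,
    show -(2 * -θ) / 2 = θ by ring, Real.norm_of_nonneg]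
  linarith [Real.sin_pos_of_pos_of_lt_pi h0 hθ]

theorem kk_norm_left (θ M y : ℝ) (hM : 1 ≤ M) : ‖kk θ (((-M:ℝ):ℂ) + y * Complex.I)‖ ≤ 2 := by
  have hE : Real.exp (-M) ≤ 1/2 := by
    have h1 : Real.exp (-M) ≤ Real.exp (-1) := Real.exp_le_exp.2 (by linarith)
    have h2 := Real.add_one_le_exp (1:ℝ)
    have h3 : Real.exp (-1) ≤ 1/2 := by
      rw [Real.exp_neg, one_div]
      apply inv_anti₀ (by norm_num); linarith
    linarith
  have h : ∀ w : ℂ, w.re = -M → ‖(1 - Complex.exp w) ^ ((-1/2:ℝ):ℂ)‖ ≤ (1/2:ℝ)^(-1/2:ℝ) := by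
    intro w hw
    rw [Complex.norm_cpow_real]
    apply Real.rpow_le_rpow_of_nonpos (by norm_num) _ (by norm_num)
    have := norm_sub_norm_le (1:ℂ) (Complex.exp w)
    rw [norm_one, Complex.norm_exp, hw] at this
    linarith
  unfold kk
  rw [norm_mul]
  have h1 := h (((-M:ℝ):ℂ) + y * Complex.I + θ * Complex.I) (by simp)
  have h2 := h (((-M:ℝ):ℂ) + y * Complex.I - θ * Complex.I) (by simp)
  calc _ ≤ (1/2:ℝ)^(-1/2:ℝ) * (1/2:ℝ)^(-1/2:ℝ) := by gcongr
    _ = 2 := by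
      rw [← Real.rpow_add (by norm_num)]
      norm_num

theorem kk_norm_arc (θ ε y : ℝ) (hε : 0 ≤ ε) (hθ : θ < π) (h1 : -θ < y) (h2 : y < θ) :
    ‖kk θ (((-ε:ℝ):ℂ) + y * Complex.I)‖ ≤ 2 * (Real.sqrt (2 * (Real.cos y - Real.cos θ)))⁻¹ := by
  have hk : ‖kk θ (y * Complex.I)‖ = (Real.sqrt (2 * (Real.cos y - Real.cos θ)))⁻¹ := by
    rw [kk_arc θ y hθ h1 h2, norm_div, Complex.norm_real, Real.norm_of_nonneg (Real.sqrt_nonneg _),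
      show -((y:ℂ)/2) * Complex.I = ((-(y/2):ℝ):ℂ) * Complex.I by push_cast; ring,
      Complex.norm_exp_ofReal_mul_I, one_div]
  rw [← hk]
  have h : ∀ φ : ℝ, Complex.exp (φ * Complex.I) ≠ 1 →
      ‖(1 - Complex.exp (((-ε:ℝ):ℂ) + φ * Complex.I)) ^ ((-1/2:ℝ):ℂ)‖
        ≤ (1/2:ℝ)^(-1/2:ℝ) * ‖(1 - Complex.exp (φ * Complex.I)) ^ ((-1/2:ℝ):ℂ)‖ := by
    intro φ hφ
    have hn : 0 < ‖1 - Complex.exp (φ * Complex.I)‖ := norm_pos_iff.2 (sub_ne_zero.2 (Ne.symm hφ))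
    rw [Complex.norm_cpow_real, Complex.norm_cpow_real, ← Real.mul_rpow (by norm_num) (norm_nonneg _)]
    apply Real.rpow_le_rpow_of_nonpos (by positivity) _ (by norm_num)
    have := den_ge2 (Complex.exp (φ * Complex.I)) (Complex.norm_exp_ofReal_mul_I _).le (Real.exp (-ε))
      (Real.exp_pos _).le (by simpa using hε)
    rw [Complex.exp_add, mul_comm (Complex.exp ((-ε:ℝ):ℂ)), ← Complex.ofReal_exp]
    linarith
  have n1 : Complex.exp ((y + θ : ℝ) * Complex.I) ≠ 1 := by
    have := exp_two_ne_one ((y+θ)/2) (by linarith) (by linarith)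
    rwa [show 2 * ((y+θ)/2) = y + θ by ring] at this
  have n2 : Complex.exp ((y - θ : ℝ) * Complex.I) ≠ 1 := by
    have := exp_neg_two_ne_one ((θ-y)/2) (by linarith) (by linarith)
    rwa [show 2 * -((θ-y)/2) = y - θ by ring] at this
  have g1 := h _ n1
  have g2 := h _ n2
  unfold kk
  rw [show ((-ε:ℝ):ℂ) + y * Complex.I + θ * Complex.I = ((-ε:ℝ):ℂ) + (y + θ : ℝ) * Complex.I by push_cast; ring,
    show ((-ε:ℝ):ℂ) + y * Complex.I - θ * Complex.I = ((-ε:ℝ):ℂ) + (y - θ : ℝ) * Complex.I by push_cast; ring,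
    show (y:ℂ) * Complex.I + θ * Complex.I = ((y + θ : ℝ) : ℂ) * Complex.I by push_cast; ring,
    show (y:ℂ) * Complex.I - θ * Complex.I = ((y - θ : ℝ) : ℂ) * Complex.I by push_cast; ring, norm_mul, norm_mul]
  have h22 : (1/2:ℝ)^(-1/2:ℝ) * (1/2:ℝ)^(-1/2:ℝ) = 2 := by
    rw [← Real.rpow_add (by norm_num)]
    norm_num
  refine (mul_le_mul g1 g2 (norm_nonneg _) (by positivity)).trans (le_of_eq ?_)
  linear_combination (‖(1 - Complex.exp (((y + θ : ℝ):ℂ) * Complex.I)) ^ ((-1/2:ℝ):ℂ)‖ * ‖(1 - Complex.exp (((y - θ:ℝ):ℂ) * Complex.I)) ^ ((-1/2:ℝ):ℂ)‖) * h22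

theorem kk_cont (θ y : ℝ) (hθ : θ < π) (h1 : -θ < y) (h2 : y < θ) :
    ContinuousAt (kk θ) (y * Complex.I) := by
  have n1 : Complex.exp ((y + θ : ℝ) * Complex.I) ≠ 1 := by
    have := exp_two_ne_one ((y+θ)/2) (by linarith) (by linarith)
    rwa [show 2 * ((y+θ)/2) = y + θ by ring] at this
  have n2 : Complex.exp ((y - θ : ℝ) * Complex.I) ≠ 1 := by
    have := exp_neg_two_ne_one ((θ-y)/2) (by linarith) (by linarith)
    rwa [show 2 * -((θ-y)/2) = y - θ by ring] at this
  unfold kk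
  refine ContinuousAt.mul ?_ ?_
  · refine ContinuousAt.cpow (by fun_prop) (by fun_prop) ?_
    rw [show (y:ℂ) * Complex.I + θ * Complex.I = ((y + θ : ℝ) : ℂ) * Complex.I by push_cast; ring]
    exact slit_one_sub _ (Complex.norm_exp_ofReal_mul_I _).le n1
  · refine ContinuousAt.cpow (by fun_prop) (by fun_prop) ?_
    rw [show (y:ℂ) * Complex.I - θ * Complex.I = ((y - θ : ℝ) : ℂ) * Complex.I by push_cast; ring]
    exact slit_one_sub _ (Complex.norm_exp_ofReal_mul_I _).le n2

theorem ff_cont_line (a θ x : ℝ) (hx : x < 0) : Continuous (fun y : ℝ => ff a θ ((x:ℂ) + y * Complex.I)) := by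
  rw [continuous_iff_continuousAt]
  intro y
  have := (ff_diff a θ ((x:ℂ) + y * Complex.I) (by simpa using hx)).continuousAt
  exact ContinuousAt.comp (f := fun y : ℝ => (x:ℂ) + y * Complex.I) this (by fun_prop)

theorem arc_limit (a θ : ℝ) (ha : -1 < a) (h0 : 0 < θ) (hθ : θ < π) :
    Tendsto (fun n : ℕ => ∫ y in (-θ)..θ, ff a θ (((-(1/((n:ℝ)+1)):ℝ):ℂ) + y * Complex.I)) atTop
      (𝓝 (∫ y in (-θ)..θ, ff a θ (y * Complex.I))) := by
  have hi := arc_integrable θ h0 hθ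
  rw [← intervalIntegrable_iff_integrableOn_Ioo_of_le (by linarith)] at hi
  have hne : ∀ᵐ y : ℝ, y ≠ θ := by simp [ae_iff, measure_singleton]
  refine intervalIntegral.tendsto_integral_filter_of_dominated_convergence
    (fun y => 2 * (Real.sqrt (2 * (Real.cos y - Real.cos θ)))⁻¹) ?_ ?_ (hi.const_mul 2) ?_
  · refine Eventually.of_forall fun n => ?_
    apply Continuous.aestronglyMeasurable
    apply ff_cont_line
    have : 0 < 1/((n:ℝ)+1) := by positivity
    linarith
  · refine Eventually.of_forall fun n => ?_
    filter_upwards [hne] with y hy hmem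
    rw [Set.uIoc_of_le (by linarith)] at hmem
    have hn : 0 < 1/((n:ℝ)+1) := by positivity
    have := kk_norm_arc θ (1/((n:ℝ)+1)) y hn.le hθ hmem.1 (lt_of_le_of_ne hmem.2 hy)
    unfold ff
    rw [norm_mul]
    have he : ‖Complex.exp ((a+1) * (((-(1/((n:ℝ)+1)):ℝ):ℂ) + y * Complex.I))‖ ≤ 1 := by
      rw [Complex.norm_exp, Real.exp_le_one_iff]
      have e : (((a:ℂ)+1) * (((-(1/((n:ℝ)+1)):ℝ):ℂ) + y * Complex.I)).re = (a+1) * (-(1/((n:ℝ)+1))) := by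
        rw [show (((a:ℂ)+1) * (((-(1/((n:ℝ)+1)):ℝ):ℂ) + y * Complex.I)) = (((a+1) * (-(1/((n:ℝ)+1))) : ℝ) : ℂ) + (((a+1) * y : ℝ) : ℂ) * Complex.I by push_cast; ring]
        simp [-Complex.ofReal_mul]
      rw [e]
      nlinarith
    calc _ ≤ 1 * (2 * (Real.sqrt (2 * (Real.cos y - Real.cos θ)))⁻¹) := by
          gcongr
      _ = _ := one_mul _
  · filter_upwards [hne] with y hy hmem
    rw [Set.uIoc_of_le (by linarith)] at hmem
    have hc : ContinuousAt (ff a θ) (y * Complex.I) :=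
      ContinuousAt.mul (by fun_prop) (kk_cont θ y hθ hmem.1 (lt_of_le_of_ne hmem.2 hy))
    have ht : Tendsto (fun n : ℕ => ((-(1/((n:ℝ)+1)):ℝ):ℂ) + y * Complex.I) atTop (𝓝 (y * Complex.I)) := by
      have h2 := (tendsto_one_div_add_atTop_nhds_zero_nat (𝕜 := ℝ)).neg
      have h3 := ((Complex.continuous_ofReal.tendsto _).comp h2).add_const (y * Complex.I)
      simpa [Function.comp_def] using h3
    exact hc.tendsto.comp ht

theorem left_limit (a θ : ℝ) (ha : -1 < a) :
    Tendsto (fun n : ℕ => ∫ y in (-θ)..θ, ff a θ (((-((n:ℝ)+1):ℝ):ℂ) + y * Complex.I)) atTop (𝓝 0) := by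
  have hlim : Tendsto (fun n : ℕ => (Real.exp ((a+1) * (-((n:ℝ)+1))) * 2) * |θ - -θ|) atTop (𝓝 0) := by
    have : Tendsto (fun n : ℕ => Real.exp ((a+1) * (-((n:ℝ)+1)))) atTop (𝓝 0) := by
      apply Real.tendsto_exp_atBot.comp
      apply Tendsto.const_mul_atBot (by linarith)
      exact tendsto_neg_atTop_atBot.comp (tendsto_atTop_add_const_right _ 1 tendsto_natCast_atTop_atTop)
    simpa using (this.mul_const 2).mul_const |θ - -θ|
  refine squeeze_zero_norm (fun n => ?_) hlim
  apply intervalIntegral.norm_integral_le_of_norm_le_const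
  intro y _
  unfold ff
  rw [norm_mul, Complex.norm_exp]
  have e : (((a:ℂ)+1) * (((-((n:ℝ)+1):ℝ):ℂ) + y * Complex.I)).re = (a+1) * (-((n:ℝ)+1)) := by
    rw [show (((a:ℂ)+1) * (((-((n:ℝ)+1):ℝ):ℂ) + y * Complex.I)) = (((a+1) * (-((n:ℝ)+1)) : ℝ) : ℂ) + (((a+1) * y : ℝ) : ℂ) * Complex.I by push_cast; ring]
    simp [-Complex.ofReal_mul]
  rw [e]
  have := kk_norm_left θ ((n:ℝ)+1) y (by linarith [(Nat.cast_nonneg n : (0:ℝ) ≤ n)])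
  gcongr

theorem contour (a θ : ℝ) (ha : -1 < a) (h0 : 0 < θ) (hθ : θ < π) :
    Complex.I * ∫ y in (-θ)..θ, ff a θ (y * Complex.I) = RR a θ - RR a (-θ) := by
  have hrect : ∀ n : ℕ,
      (∫ x : ℝ in (-((n:ℝ)+1))..(-(1/((n:ℝ)+1))), ff a θ (x + ((-θ:ℝ):ℂ) * Complex.I)) -
      (∫ x : ℝ in (-((n:ℝ)+1))..(-(1/((n:ℝ)+1))), ff a θ (x + (θ:ℂ) * Complex.I)) +
      Complex.I • (∫ y : ℝ in (-θ)..θ, ff a θ (((-(1/((n:ℝ)+1)):ℝ):ℂ) + y * Complex.I)) -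
      Complex.I • (∫ y : ℝ in (-θ)..θ, ff a θ (((-((n:ℝ)+1):ℝ):ℂ) + y * Complex.I)) = 0 := by
    intro n
    have := Complex.integral_boundary_rect_eq_zero_of_differentiableOn (ff a θ)
      (⟨-((n:ℝ)+1), -θ⟩ : ℂ) (⟨-(1/((n:ℝ)+1)), θ⟩ : ℂ) ?_
    · simpa only using this
    · intro z hz
      apply DifferentiableAt.differentiableWithinAt
      apply ff_diff
      have h1 := hz.1
      simp only [Set.mem_preimage] at h1
      have hn : 0 < 1/((n:ℝ)+1) := by positivity
      have hle := h1.2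
      have : max (-((n:ℝ)+1)) (-(1/((n:ℝ)+1))) < 0 := by
        apply max_lt
        · have : (0:ℝ) < (n:ℝ) + 1 := by positivity
          linarith
        · linarith
      exact lt_of_le_of_lt hle this
  have l1 := tendsto_Iio _ (ff_radial_integrable a θ ha (exp_two_ne_one θ h0 hθ))
  have l2 := tendsto_Iio _ (ff_radial_integrable a (-θ) ha (exp_neg_two_ne_one θ h0 hθ))
  rw [ff_radial_integral] at l1 l2
  have hneg : ∀ ζ, ff a (-θ) ζ = ff a θ ζ := fun ζ => by unfold ff; rw [kk_neg]
  simp only [hneg] at l2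
  have l3 := (arc_limit a θ ha h0 hθ).const_smul Complex.I
  have l4 := (left_limit a θ ha).const_smul Complex.I
  have hl := ((l2.sub l1).add l3).sub l4
  have := tendsto_nhds_unique (hl.congr hrect) tendsto_const_nhds
  simp only [smul_eq_mul, mul_zero, sub_zero] at this
  linear_combination this

theorem mehler (a θ : ℝ) (ha : -1 < a) (h0 : 0 < θ) (hθ : θ < π) :
    Complex.I * π * legendreP a (Real.cos θ) = RR a θ - RR a (-θ) := by
  rw [← contour a θ ha h0 hθ]
  have hc1 : Real.cos θ ≠ 1 := by
    have := (cos_image ▸ Set.mem_image_of_mem Real.cos (show θ ∈ Set.Ioo 0 π from ⟨h0, hθ⟩) : Real.cos θ ∈ Set.Ioo (-1) 1)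
    exact this.2.ne
  have hi := arc_integrable θ h0 hθ
  rw [← intervalIntegrable_iff_integrableOn_Ioo_of_le (by linarith)] at hi
  set g : ℝ → ℂ := fun y => Complex.exp ((a + 1/2) * y * Complex.I) / ((Real.sqrt (2 * (Real.cos y - Real.cos θ)) : ℝ) : ℂ) with hg
  have hgi : IntervalIntegrable g volume (-θ) θ := by
    refine hi.mono_fun ?_ ?_
    · apply Measurable.aestronglyMeasurable
      fun_prop
    · refine Eventually.of_forall fun y => ?_
      simp only [hg]
      rw [norm_div, Complex.norm_real, show ((a:ℂ)+1/2) * y * Complex.I = (((a+1/2) * y : ℝ):ℂ) * Complex.I by push_cast; ring,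
        Complex.norm_exp_ofReal_mul_I, norm_inv, one_div]
  have e1 : ∫ y in (-θ)..θ, ff a θ (y * Complex.I) = ∫ y in (-θ)..θ, g y := by
    apply intervalIntegral.integral_congr_ae
    have hne : ∀ᵐ y : ℝ, y ≠ θ := by simp [ae_iff, measure_singleton]
    filter_upwards [hne] with y hy hmem
    rw [Set.uIoc_of_le (by linarith)] at hmem
    unfold ff
    rw [kk_arc θ y hθ hmem.1 (lt_of_le_of_ne hmem.2 hy), ← mul_div_assoc, ← Complex.exp_add]
    simp only [hg]
    congr 2
    ring
  have hs1 : IntervalIntegrable g volume (-θ) 0 := hgi.mono_set (by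
    rw [Set.uIcc_of_le (by linarith), Set.uIcc_of_le (by linarith)]
    exact Set.Icc_subset_Icc le_rfl h0.le)
  have hs2 : IntervalIntegrable g volume 0 θ := hgi.mono_set (by
    rw [Set.uIcc_of_le (by linarith), Set.uIcc_of_le (by linarith)]
    exact Set.Icc_subset_Icc (by linarith) le_rfl)
  have hs3 : IntervalIntegrable (fun y => g (-y)) volume 0 θ := by
    have := (IntervalIntegrable.iff_comp_neg).1 hs1
    simpa using this.symm
  have e2 : ∫ y in (-θ)..0, g y = ∫ y in (0:ℝ)..θ, g (-y) := by
    rw [intervalIntegral.integral_comp_neg]; simp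
  rw [e1, ← intervalIntegral.integral_add_adjacent_intervals hs1 hs2, e2, ← intervalIntegral.integral_add hs3 hs2]
  unfold legendreP
  rw [if_neg hc1, Real.arccos_cos h0.le hθ.le]
  have e3 : ∀ y : ℝ, g (-y) + g y = 2 * (Complex.cos ((2*(a:ℂ) + 1) * (y:ℂ) / 2) / ((Real.sqrt (2 * (Real.cos y - Real.cos θ)) : ℝ) : ℂ)) := by
    intro y
    simp only [hg, Real.cos_neg, Complex.cos]
    rw [show (2*(a:ℂ) + 1) * (y:ℂ) / 2 = (a + 1/2) * y by ring]
    push_cast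
    rw [show (-(((a:ℂ)+1/2) * y) * Complex.I) = (a+1/2) * (-y) * Complex.I by ring]
    ring
  simp only [e3]
  rw [intervalIntegral.integral_const_mul]
  have : (π:ℂ) ≠ 0 := by exact_mod_cast Real.pi_ne_zero
  push_cast
  field_simp


theorem cos_ne_one (θ : ℝ) (h0 : 0 < θ) (hθ : θ < π) : Real.cos θ ≠ 1 := by
  have := (cos_image ▸ Set.mem_image_of_mem Real.cos (show θ ∈ Set.Ioo 0 π from ⟨h0, hθ⟩) : Real.cos θ ∈ Set.Ioo (-1) 1)
  exact this.2.ne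

theorem legendreP_cos (ν : ℂ) (θ : ℝ) (h0 : 0 < θ) (hθ : θ < π) :
    legendreP ν (Real.cos θ) = ((2 / π : ℝ) : ℂ) * ∫ β in Set.Ioo 0 θ,
      Complex.cos ((2*ν + 1) * (β:ℂ) / 2) / ((Real.sqrt (2 * (Real.cos β - Real.cos θ)) : ℝ) : ℂ) := by
  unfold legendreP
  rw [if_neg (cos_ne_one θ h0 hθ), Real.arccos_cos h0.le hθ.le, intervalIntegral.integral_of_le h0.le,
    integral_Ioc_eq_integral_Ioo]

theorem legendreP_symm (ν : ℂ) (x : ℝ) : legendreP (-ν-1) x = legendreP ν x := by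
  unfold legendreP
  have : ∀ β : ℂ, Complex.cos ((2*(-ν-1) + 1) * β / 2) = Complex.cos ((2*ν + 1) * β / 2) := by
    intro β
    rw [← Complex.cos_neg]; congr 1; ring
  simp only [this]

theorem arc_half (θ : ℝ) (h0 : 0 < θ) (hθ : θ < π) :
    IntegrableOn (fun y : ℝ => (Real.sqrt (2 * (Real.cos y - Real.cos θ)))⁻¹) (Set.Ioo 0 θ) :=
  (arc_integrable θ h0 hθ).mono_set (Set.Ioo_subset_Ioo (by linarith) le_rfl)

theorem integrand_bound (ν : ℂ) (θ β : ℝ) (hθ : θ < π) (hβ : β ∈ Set.Ioo 0 θ) :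
    ‖Complex.cos ((2*ν + 1) * (β:ℂ) / 2) / ((Real.sqrt (2 * (Real.cos β - Real.cos θ)) : ℝ) : ℂ)‖
      ≤ Real.exp (‖2*ν+1‖ * π / 2) * (Real.sqrt (2 * (Real.cos β - Real.cos θ)))⁻¹ := by
  rw [norm_div, Complex.norm_real, Real.norm_of_nonneg (Real.sqrt_nonneg _), div_eq_mul_inv]
  apply mul_le_mul_of_nonneg_right _ (by positivity)
  have h : ∀ w : ℂ, ‖Complex.cos w‖ ≤ Real.exp ‖w‖ := by
    intro w
    unfold Complex.cos
    rw [norm_div]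
    have h1 := Complex.norm_exp_le_exp_norm (w * Complex.I)
    have h2 := Complex.norm_exp_le_exp_norm (-w * Complex.I)
    rw [norm_mul, Complex.norm_I, mul_one] at h1
    rw [norm_mul, Complex.norm_I, mul_one, norm_neg] at h2
    have h3 := norm_add_le (Complex.exp (w * Complex.I)) (Complex.exp (-w * Complex.I))
    have : ‖(2:ℂ)‖ = 2 := by simp
    rw [this, div_le_iff₀ (by norm_num)]
    linarith
  refine (h _).trans (Real.exp_le_exp.2 ?_)
  rw [norm_div, norm_mul, Complex.norm_real, Real.norm_of_nonneg hβ.1.le]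
  have : ‖(2:ℂ)‖ = 2 := by simp
  rw [this]
  have : β ≤ π := by linarith [hβ.2]
  gcongr

theorem M_bound : ∃ C : ℝ, 0 ≤ C ∧ ∀ θ : ℝ, 0 < θ → θ < π →
    ∫ y in Set.Ioo 0 θ, (Real.sqrt (2 * (Real.cos y - Real.cos θ)))⁻¹ ≤ C * (Real.sin θ)^(-1/4:ℝ) := by
  obtain ⟨C, hC0, hC⟩ := eulerU_bound (-1/2) (by norm_num)
  refine ⟨C * (2:ℝ)^(-1/4:ℝ), by positivity, fun θ h0 hθ => ?_⟩
  have hs : 0 < Real.sin θ := Real.sin_pos_of_pos_of_lt_pi h0 hθ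
  have h1 := mehler (-1/2) θ (by norm_num) h0 hθ
  rw [legendreP_cos _ θ h0 hθ] at h1
  have e : ∀ β : ℝ, Complex.cos ((2*((-1/2:ℝ):ℂ) + 1) * (β:ℂ) / 2) / ((Real.sqrt (2 * (Real.cos β - Real.cos θ)) : ℝ) : ℂ)
      = (((Real.sqrt (2 * (Real.cos β - Real.cos θ)))⁻¹ : ℝ) : ℂ) := by
    intro β
    rw [show (2*((-1/2:ℝ):ℂ) + 1) * (β:ℂ) / 2 = 0 by push_cast; ring, Complex.cos_zero]
    push_cast
    rw [one_div]
  simp only [e] at h1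
  rw [integral_complex_ofReal] at h1
  set M := ∫ y in Set.Ioo 0 θ, (Real.sqrt (2 * (Real.cos y - Real.cos θ)))⁻¹ with hM
  have hpi : (π:ℂ) ≠ 0 := by exact_mod_cast Real.pi_ne_zero
  have h2 : (2:ℂ) * M * Complex.I = RR (-1/2) θ - RR (-1/2) (-θ) := by
    rw [← h1]; push_cast; field_simp
  have hR : ∀ σ : ℝ, ‖RR (-1/2) σ‖ = ‖eulerU (-1/2) (Complex.exp (((2*σ:ℝ):ℂ) * Complex.I))‖ := by
    intro σ
    unfold RR
    rw [norm_mul, show (((-1/2:ℝ):ℂ)+1) * σ * Complex.I = (((-1/2+1)*σ : ℝ):ℂ) * Complex.I by push_cast; ring,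
      Complex.norm_exp_ofReal_mul_I, one_mul]
  have b1 := hC _ (Complex.norm_exp_ofReal_mul_I (2*θ)).le (exp_two_ne_one θ h0 hθ)
  have b2 := hC _ (Complex.norm_exp_ofReal_mul_I (2*(-θ))).le (exp_neg_two_ne_one θ h0 hθ)
  rw [norm_one_sub_exp θ h0 hθ] at b1
  rw [norm_one_sub_exp_neg θ h0 hθ] at b2
  rw [← hR] at b1 b2
  have h3 := norm_sub_le (RR (-1/2) θ) (RR (-1/2) (-θ))
  rw [← h2, norm_mul, norm_mul, Complex.norm_I, Complex.norm_real, mul_one, Real.norm_eq_abs] at h3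
  have h4 : ‖(2:ℂ)‖ = 2 := by simp
  rw [h4] at h3
  rw [Real.mul_rpow (by norm_num) hs.le] at b1 b2
  have := le_abs_self M
  nlinarith

theorem legendreP_bound : ∃ C : ℝ, 0 ≤ C ∧ ∀ (ν : ℂ) (θ : ℝ), 0 < θ → θ < π →
    ‖legendreP ν (Real.cos θ)‖ ≤ C * Real.exp (‖2*ν+1‖ * π / 2) * (Real.sin θ)^(-1/4:ℝ) := by
  obtain ⟨C, hC0, hC⟩ := M_bound
  refine ⟨2 / π * C, by positivity, fun ν θ h0 hθ => ?_⟩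
  rw [legendreP_cos ν θ h0 hθ, norm_mul, Complex.norm_real, Real.norm_of_nonneg (by positivity)]
  have h := norm_integral_le_of_norm_le
    (f := fun β : ℝ => Complex.cos ((2*ν + 1) * (β:ℂ) / 2) / ((Real.sqrt (2 * (Real.cos β - Real.cos θ)) : ℝ) : ℂ))
    ((arc_half θ h0 hθ).const_mul (Real.exp (‖2*ν+1‖ * π / 2)))
    ((ae_restrict_iff' measurableSet_Ioo).2
        (Eventually.of_forall fun β hβ => integrand_bound ν θ β hθ hβ))
  rw [MeasureTheory.integral_const_mul] at h
  have hp : 0 < 2/π := by positivity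
  calc _ ≤ 2/π * (Real.exp (‖2*ν+1‖ * π / 2) * (C * (Real.sin θ)^(-1/4:ℝ))) := by
        gcongr
        refine h.trans ?_
        gcongr
        exact hC θ h0 hθ
    _ = _ := by ring

theorem legendreP_diff (θ : ℝ) (h0 : 0 < θ) (hθ : θ < π) :
    Differentiable ℂ (fun ν => legendreP ν (Real.cos θ)) := by
  intro c
  have : (fun ν => legendreP ν (Real.cos θ)) = fun ν => ((2 / π : ℝ) : ℂ) * ∫ β in Set.Ioo 0 θ,
      Complex.cos ((2*ν + 1) * (β:ℂ) / 2) / ((Real.sqrt (2 * (Real.cos β - Real.cos θ)) : ℝ) : ℂ) := by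
    ext ν; exact legendreP_cos ν θ h0 hθ
  rw [this]
  apply DifferentiableAt.const_mul
  refine holo_integral _ c 1 one_pos (fun β => Real.exp ((‖2*c+1‖ + 2) * π / 2) * (Real.sqrt (2 * (Real.cos β - Real.cos θ)))⁻¹)
    ?_ ?_ ?_ ?_
  · intro ν _
    apply Measurable.aestronglyMeasurable
    fun_prop
  · refine Eventually.of_forall fun β => ?_
    apply Differentiable.differentiableOn
    fun_prop
  · rw [ae_restrict_iff' measurableSet_Ioo]
    refine Eventually.of_forall fun β hβ ν hν => ?_
    refine (integrand_bound ν θ β hθ hβ).trans ?_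
    have : ‖2*ν+1‖ ≤ ‖2*c+1‖ + 2 := by
      rw [Metric.mem_ball, dist_eq_norm] at hν
      have h1 : 2*ν+1 = (2*c+1) + 2*(ν - c) := by ring
      rw [h1]
      refine (norm_add_le _ _).trans ?_
      rw [norm_mul]
      have : ‖(2:ℂ)‖ = 2 := by simp
      rw [this]; linarith
    gcongr
  · exact (arc_half θ h0 hθ).const_mul _

theorem legendreP_meas (ν : ℂ) : AEStronglyMeasurable (fun θ : ℝ => legendreP ν (Real.cos θ))
    (volume.restrict (Set.Ioo 0 π)) := by
  have h1 : StronglyMeasurable (fun θ : ℝ => ((2 / π : ℝ) : ℂ) * ∫ β : ℝ,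
      ({p : ℝ × ℝ | 0 < p.2 ∧ p.2 < p.1}.indicator (fun p : ℝ × ℝ => Complex.cos ((2*ν + 1) * (p.2:ℂ) / 2) /
        ((Real.sqrt (2 * (Real.cos p.2 - Real.cos p.1)) : ℝ) : ℂ)) (θ, β))) := by
    apply StronglyMeasurable.const_mul
    apply StronglyMeasurable.integral_prod_right (f := fun θ β => ({p : ℝ × ℝ | 0 < p.2 ∧ p.2 < p.1}.indicator (fun p : ℝ × ℝ => Complex.cos ((2*ν + 1) * (p.2:ℂ) / 2) /
        ((Real.sqrt (2 * (Real.cos p.2 - Real.cos p.1)) : ℝ) : ℂ)) (θ, β)))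
    apply Measurable.stronglyMeasurable
    apply Measurable.indicator
    · fun_prop
    · exact (measurableSet_lt measurable_const measurable_snd).inter (measurableSet_lt measurable_snd measurable_fst)
  refine h1.aestronglyMeasurable.congr ?_
  refine (ae_restrict_iff' measurableSet_Ioo).2 (Eventually.of_forall fun θ hθ => ?_)
  beta_reduce
  rw [legendreP_cos ν θ hθ.1 hθ.2]
  congr 1
  rw [← MeasureTheory.integral_indicator measurableSet_Ioo]
  rfl

theorem legendreP_neg_cos (ν : ℂ) (θ : ℝ) : legendreP ν (-Real.cos θ) = legendreP ν (Real.cos (π - θ)) := by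
  rw [Real.cos_pi_sub]

theorem legendreP_meas' (ν : ℂ) : AEStronglyMeasurable (fun θ : ℝ => legendreP ν (-Real.cos θ))
    (volume.restrict (Set.Ioo 0 π)) := by
  have h := legendreP_meas ν
  have hmp : MeasurePreserving (fun θ : ℝ => π - θ) (volume.restrict (Set.Ioo 0 π)) (volume.restrict (Set.Ioo 0 π)) := by
    have := (Measure.measurePreserving_sub_left (volume : Measure ℝ) π).restrict_preimage (measurableSet_Ioo (a := (0:ℝ)) (b := π))
    simpa using this
  have h2 := h.comp_measurePreserving hmp
  refine h2.congr (Eventually.of_forall fun θ => ?_)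
  simp [Real.cos_pi_sub]

theorem quartic_bound : ∃ C : ℝ, 0 ≤ C ∧ ∀ (ν : ℂ) (θ : ℝ), 0 < θ → θ < π → ∀ (i j : ℕ), i + j = 4 →
    ‖(Real.sin θ : ℂ) * (Real.cos θ * legendreP ν (Real.cos θ)^i * legendreP ν (-Real.cos θ)^j)‖
      ≤ C * (Real.exp (‖2*ν+1‖ * π / 2))^4 := by
  obtain ⟨C, hC0, hC⟩ := legendreP_bound
  refine ⟨C^4, by positivity, fun ν θ h0 hθ i j hij => ?_⟩
  have hs : 0 < Real.sin θ := Real.sin_pos_of_pos_of_lt_pi h0 hθ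
  have b1 := hC ν θ h0 hθ
  have b2 := hC ν (π - θ) (by linarith) (by linarith)
  rw [Real.sin_pi_sub, ← legendreP_neg_cos] at b2
  rw [norm_mul, norm_mul, norm_mul, norm_pow, norm_pow, Complex.norm_real, Complex.norm_real, Real.norm_of_nonneg hs.le,
    Real.norm_eq_abs]
  set E := Real.exp (‖2*ν+1‖ * π / 2)
  have hE : 0 < E := Real.exp_pos _
  set B := C * E * (Real.sin θ)^(-1/4:ℝ) with hB
  have hB0 : 0 ≤ B := by positivity
  have hc := Real.abs_cos_le_one θ
  calc _ ≤ Real.sin θ * (1 * B^i * B^j) := by gcongr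
    _ = Real.sin θ * B^4 := by rw [one_mul, ← pow_add, hij]
    _ = C^4 * E^4 * (Real.sin θ * ((Real.sin θ)^(-1/4:ℝ))^4) := by rw [hB]; ring
    _ = C^4 * E^4 := by
        rw [← Real.rpow_natCast ((Real.sin θ)^(-1/4:ℝ)) 4, ← Real.rpow_mul hs.le]
        norm_num
        rw [Real.rpow_neg_one, mul_inv_cancel₀ hs.ne', mul_one]

theorem quartic_meas (ν : ℂ) (i j : ℕ) : AEStronglyMeasurable
    (fun θ : ℝ => (Real.sin θ : ℂ) * (Real.cos θ * legendreP ν (Real.cos θ)^i * legendreP ν (-Real.cos θ)^j))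
    (volume.restrict (Set.Ioo 0 π)) := by
  have h1 := (legendreP_meas ν).pow i
  have h2 := (legendreP_meas' ν).pow j
  have h3 : AEStronglyMeasurable (fun θ : ℝ => (Real.sin θ : ℂ)) (volume.restrict (Set.Ioo 0 π)) :=
    Continuous.aestronglyMeasurable (by fun_prop)
  have h4 : AEStronglyMeasurable (fun θ : ℝ => (Real.cos θ : ℂ)) (volume.restrict (Set.Ioo 0 π)) :=
    Continuous.aestronglyMeasurable (by fun_prop)
  exact h3.mul ((h4.mul h1).mul h2)

theorem quartic_int (ν : ℂ) (i j : ℕ) (hij : i + j = 4) : IntervalIntegrable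
    (fun θ : ℝ => (Real.sin θ : ℂ) * (Real.cos θ * legendreP ν (Real.cos θ)^i * legendreP ν (-Real.cos θ)^j))
    volume 0 π := by
  rw [intervalIntegrable_iff_integrableOn_Ioo_of_le Real.pi_pos.le]
  obtain ⟨C, _, hC⟩ := quartic_bound
  refine Integrable.mono' (g := fun _ => C * (Real.exp (‖2*ν+1‖ * π / 2))^4) (integrableOn_const (by simp)) (quartic_meas ν i j) ?_
  exact (ae_restrict_iff' measurableSet_Ioo).2 (Eventually.of_forall fun θ hθ => hC ν θ hθ.1 hθ.2 i j hij)

theorem main_diff : Differentiable ℂ (fun ν => ∫ θ in (0:ℝ)..π, (Real.sin θ : ℂ) *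
    (Real.cos θ * legendreP ν (Real.cos θ)^3 * legendreP ν (-Real.cos θ)^1)) := by
  intro c
  simp only [intervalIntegral.integral_of_le Real.pi_pos.le, integral_Ioc_eq_integral_Ioo]
  obtain ⟨C, hC0, hC⟩ := quartic_bound
  refine holo_integral _ c 1 one_pos (fun _ => C * (Real.exp ((‖2*c+1‖ + 2) * π / 2))^4) ?_ ?_ ?_ ?_
  · intro ν _; exact quartic_meas ν 3 1
  · refine (ae_restrict_iff' measurableSet_Ioo).2 (Eventually.of_forall fun θ hθ => ?_)
    apply Differentiable.differentiableOn
    have d1 := legendreP_diff θ hθ.1 hθ.2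
    have d2 := legendreP_diff (π - θ) (by linarith [hθ.2]) (by linarith [hθ.1])
    simp only [← legendreP_neg_cos] at d2
    exact (((d1.pow 3).const_mul _).mul (d2.pow 1)).const_mul _
  · refine (ae_restrict_iff' measurableSet_Ioo).2 (Eventually.of_forall fun θ hθ ν hν => ?_)
    refine (hC ν θ hθ.1 hθ.2 3 1 rfl).trans ?_
    have : ‖2*ν+1‖ ≤ ‖2*c+1‖ + 2 := by
      rw [Metric.mem_ball, dist_eq_norm] at hν
      have h1 : 2*ν+1 = (2*c+1) + 2*(ν - c) := by ring
      rw [h1]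
      refine (norm_add_le _ _).trans ?_
      rw [norm_mul]
      have : ‖(2:ℂ)‖ = 2 := by simp
      rw [this]; linarith
    gcongr
  · exact integrableOn_const (by simp)


theorem connection (a θ : ℝ) (ha : -1 < a) (h0 : 0 < θ) (hθ : θ < π) :
    π * (Complex.exp (a * π * Complex.I) * legendreP a (Real.cos θ) - legendreP a (-Real.cos θ))
      = 2 * Complex.sin (a * π) * RR a θ := by
  have m1 := mehler a θ ha h0 hθ
  have m2 := mehler a (π - θ) ha (by linarith) (by linarith)
  rw [← legendreP_neg_cos] at m2
  have r1 : RR a (π - θ) = - (Complex.exp (a * π * Complex.I) * RR a (-θ)) := by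
    unfold RR
    rw [show ((2 * (π - θ) : ℝ):ℂ) * Complex.I = ((2 * (-θ) : ℝ):ℂ) * Complex.I + 2 * π * Complex.I by push_cast; ring,
      Complex.exp_add, Complex.exp_two_pi_mul_I, mul_one,
      show ((a:ℂ)+1) * ((π - θ : ℝ):ℂ) * Complex.I = a * π * Complex.I + ((a+1) * ((-θ:ℝ):ℂ) * Complex.I + π * Complex.I) by push_cast; ring,
      Complex.exp_add, Complex.exp_add, Complex.exp_pi_mul_I]
    ring
  have r2 : RR a (-(π - θ)) = - (Complex.exp (-(a * π * Complex.I)) * RR a θ) := by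
    unfold RR
    rw [show ((2 * (-(π - θ)) : ℝ):ℂ) * Complex.I = ((2 * θ : ℝ):ℂ) * Complex.I + -(2 * π * Complex.I) by push_cast; ring,
      Complex.exp_add, Complex.exp_neg (2 * π * Complex.I), Complex.exp_two_pi_mul_I, inv_one, mul_one,
      show ((a:ℂ)+1) * ((-(π - θ) : ℝ):ℂ) * Complex.I = -(a * π * Complex.I) + ((a+1) * (θ:ℂ) * Complex.I + -(π * Complex.I)) by push_cast; ring,
      Complex.exp_add, Complex.exp_add, Complex.exp_neg (π * Complex.I), Complex.exp_pi_mul_I]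
    norm_num
    ring
  rw [r1, r2] at m2
  have hs : Complex.exp (a * π * Complex.I) - Complex.exp (-(a * π * Complex.I)) = 2 * Complex.I * Complex.sin (a * π) := by
    rw [← neg_mul, Complex.exp_mul_I, Complex.exp_mul_I, Complex.cos_neg, Complex.sin_neg]; ring
  apply mul_left_cancel₀ Complex.I_ne_zero
  linear_combination Complex.exp (a * π * Complex.I) * m1 - m2 + RR a θ * hs

theorem product_formula (a θ : ℝ) (ha : -1 < a) (ha0 : a < 0) (h0 : 0 < θ) (hθ : θ < π) :
    (π:ℂ)^2 * (legendreP a (Real.cos θ)^2 - legendreP a (-Real.cos θ)^2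
      + 2 * Complex.I * Complex.sin (a * π) * legendreP a (Real.cos θ) * legendreP a (-Real.cos θ))
      = - (4 * Complex.sin (a * π)^2 * (RR a θ * RR (-a-1) θ)) := by
  have c1 := connection a θ ha h0 hθ
  have c2 := connection (-a-1) θ (by linarith) h0 hθ
  have hsym : ∀ x, legendreP ((-a-1:ℝ):ℂ) x = legendreP a x := by
    intro x
    rw [← legendreP_symm (a:ℂ) x]; push_cast; rfl
  rw [hsym, hsym] at c2
  have e1 : Complex.exp (((-a-1:ℝ):ℂ) * π * Complex.I) = - Complex.exp (-(a * π * Complex.I)) := by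
    rw [show ((-a-1:ℝ):ℂ) * π * Complex.I = -(a * π * Complex.I) + -(π * Complex.I) by push_cast; ring,
      Complex.exp_add, Complex.exp_neg (π * Complex.I), Complex.exp_pi_mul_I]
    norm_num
  have e2 : Complex.sin (((-a-1:ℝ):ℂ) * π) = Complex.sin (a * π) := by
    rw [show ((-a-1:ℝ):ℂ) * π = -(a * π + π) by push_cast; ring, Complex.sin_neg, Complex.sin_add_pi, neg_neg]
  rw [e1, e2] at c2
  have hs : Complex.exp (a * π * Complex.I) - Complex.exp (-(a * π * Complex.I)) = 2 * Complex.I * Complex.sin (a * π) := by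
    rw [← neg_mul, Complex.exp_mul_I, Complex.exp_mul_I, Complex.cos_neg, Complex.sin_neg]; ring
  have hm : Complex.exp (a * π * Complex.I) * Complex.exp (-(a * π * Complex.I)) = 1 := by
    rw [← Complex.exp_add]; simp
  set P := legendreP a (Real.cos θ)
  set Q := legendreP a (-Real.cos θ)
  set e := Complex.exp (a * π * Complex.I)
  set e' := Complex.exp (-(a * π * Complex.I))
  have h12 : (π * (e * P - Q)) * (π * (-e' * P - Q)) = (2 * Complex.sin (a * π) * RR a θ) * (2 * Complex.sin (a * π) * RR (-a-1) θ) := by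
    rw [c1, c2]
  linear_combination -h12 - (π:ℂ)^2 * P * Q * hs - (π:ℂ)^2 * P^2 * hm

theorem strip_integral (a : ℝ) (ha : -1 < a) (ha0 : a < 0) (ha2 : a ≠ -1/2) :
    (∫ θ in (0:ℝ)..π, (Real.sin θ : ℂ) *
      (Real.cos θ * legendreP a (Real.cos θ)^3 * legendreP a (-Real.cos θ)^1)) * (π * (2*a+1)^2)
      = Complex.sin (2 * a * π) * Complex.cos (a * π) := by
  set s := Complex.sin (a * π) with hsdef
  set K := eulerU a 0 * eulerU (-a-1) 0 with hK
  set X : ℕ → ℕ → ℝ → ℂ := fun i j θ => (Real.sin θ : ℂ) *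
      (Real.cos θ * legendreP a (Real.cos θ)^i * legendreP a (-Real.cos θ)^j) with hX
  have hXi : ∀ i j, i + j = 4 → IntervalIntegrable (X i j) volume 0 π := fun i j h => quartic_int a i j h
  have hXs : ∀ i j, ∫ θ in (0:ℝ)..π, X i j θ = - ∫ θ in (0:ℝ)..π, X j i θ := by
    intro i j
    have h := intervalIntegral.integral_comp_sub_left (a := 0) (b := π) (X i j) π
    rw [sub_self, sub_zero] at h
    rw [← h, ← intervalIntegral.integral_neg]
    congr 1
    ext θ
    simp only [hX, Real.sin_pi_sub, Real.cos_pi_sub, neg_neg]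
    push_cast
    ring
  have h22 : ∫ θ in (0:ℝ)..π, X 2 2 θ = 0 := by
    have := hXs 2 2
    linear_combination this/2
  have h40 : ∫ θ in (0:ℝ)..π, X 4 0 θ = - ∫ θ in (0:ℝ)..π, X 0 4 θ := hXs 4 0
  have h31 : ∫ θ in (0:ℝ)..π, X 3 1 θ = - ∫ θ in (0:ℝ)..π, X 1 3 θ := hXs 3 1
  -- the square of the product, expanded
  have hW : ∫ θ in (0:ℝ)..π, (X 4 0 θ + X 0 4 θ + (-2 - 4 * s^2) * X 2 2 θ + (4 * Complex.I * s) * (X 3 1 θ - X 1 3 θ))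
      = 8 * Complex.I * s * ∫ θ in (0:ℝ)..π, X 3 1 θ := by
    have i40 := hXi 4 0 rfl
    have i04 := hXi 0 4 rfl
    have i22 := (hXi 2 2 rfl).const_mul (-2 - 4 * s^2)
    have i31 := hXi 3 1 rfl
    have i13 := hXi 1 3 rfl
    rw [intervalIntegral.integral_add ((i40.add i04).add i22) ((i31.sub i13).const_mul _),
      intervalIntegral.integral_add (i40.add i04) i22, intervalIntegral.integral_add i40 i04,
      intervalIntegral.integral_const_mul, intervalIntegral.integral_const_mul,
      intervalIntegral.integral_sub i31 i13, h22, h40]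
    linear_combination (-4 * Complex.I * s) * h31
  have hcirc := circle_mean a (-a-1) ha (by linarith)
  rw [← hK] at hcirc
  have hsub := intervalIntegral.integral_comp_mul_left (a := 0) (b := π) (fun φ : ℝ => ((Complex.exp (φ * Complex.I))^2 - 1) *
      (eulerU a (Complex.exp (φ * Complex.I)) * eulerU (-a-1) (Complex.exp (φ * Complex.I)))^2) (two_ne_zero (α := ℝ))
  rw [mul_zero, hcirc] at hsub
  have hpt : (π:ℂ)^4 * ∫ θ in (0:ℝ)..π, (X 4 0 θ + X 0 4 θ + (-2 - 4 * s^2) * X 2 2 θ + (4 * Complex.I * s) * (X 3 1 θ - X 1 3 θ))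
      = (-4 * Complex.I * s^4) * ∫ θ in (0:ℝ)..π, ((Complex.exp (((2*θ:ℝ):ℂ) * Complex.I))^2 - 1) *
      (eulerU a (Complex.exp (((2*θ:ℝ):ℂ) * Complex.I)) * eulerU (-a-1) (Complex.exp (((2*θ:ℝ):ℂ) * Complex.I)))^2 := by
    rw [← intervalIntegral.integral_const_mul, ← intervalIntegral.integral_const_mul]
    apply intervalIntegral.integral_congr_ae
    have hne : ∀ᵐ y : ℝ, y ≠ π := by simp [ae_iff, measure_singleton]
    filter_upwards [hne] with θ hy hmem
    rw [Set.uIoc_of_le Real.pi_pos.le] at hmem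
    have hp := product_formula a θ ha ha0 hmem.1 (lt_of_le_of_ne hmem.2 hy)
    have hRR : RR a θ * RR (-a-1) θ = Complex.exp (θ * Complex.I) * (eulerU a (Complex.exp (((2*θ:ℝ):ℂ) * Complex.I)) * eulerU (-a-1) (Complex.exp (((2*θ:ℝ):ℂ) * Complex.I))) := by
      unfold RR
      rw [show Complex.exp (θ * Complex.I) = Complex.exp ((a+1) * θ * Complex.I) * Complex.exp ((((-a-1:ℝ):ℂ)+1) * θ * Complex.I) by
        rw [← Complex.exp_add]; congr 1; push_cast; ring]
      ring
    rw [hRR] at hp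
    set G := eulerU a (Complex.exp (((2*θ:ℝ):ℂ) * Complex.I)) * eulerU (-a-1) (Complex.exp (((2*θ:ℝ):ℂ) * Complex.I))
    set P := legendreP a (Real.cos θ) with hP
    set Q := legendreP a (-Real.cos θ) with hQ
    have hx : X 4 0 θ + X 0 4 θ + (-2 - 4 * s^2) * X 2 2 θ + (4 * Complex.I * s) * (X 3 1 θ - X 1 3 θ)
        = (Real.sin θ : ℂ) * Real.cos θ * (P^2 - Q^2 + 2 * Complex.I * s * P * Q)^2 := by
      simp only [hX, ← hP, ← hQ]
      have := Complex.I_sq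
      linear_combination (-4 * s^2 * P^2 * Q^2 * (Real.sin θ : ℂ) * Real.cos θ) * this
    rw [hx]
    have hsc : (Complex.exp (((2*θ:ℝ):ℂ) * Complex.I))^2 - 1 = 4 * Complex.I * (Complex.exp (θ * Complex.I))^2 * ((Real.sin θ : ℂ) * Real.cos θ) := by
      have e2 : Complex.exp (((2*θ:ℝ):ℂ) * Complex.I) = (Complex.exp (θ * Complex.I))^2 := by
        rw [← Complex.exp_nat_mul]; congr 1; push_cast; ring
      rw [e2, Complex.exp_mul_I]
      push_cast
      have hI := Complex.I_sq
      have hcs := Complex.sin_sq_add_cos_sq (θ:ℂ)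
      set S := Complex.sin (θ:ℂ)
      set c := Complex.cos (θ:ℂ)
      have hmul : (c + S * Complex.I) * (c - S * Complex.I) = 1 := by
        linear_combination hcs - S^2 * hI
      linear_combination (1 + (c + S * Complex.I) * (c - S * Complex.I)) * hmul
    rw [hsc]
    have hI := Complex.I_sq
    have hsq := congrArg (fun z => z^2) hp
    beta_reduce at hsq
    linear_combination ((Real.sin θ : ℂ) * Real.cos θ) * hsq + (16 * s^4 * (Complex.exp (θ * Complex.I))^2 * ((Real.sin θ : ℂ) * Real.cos θ) * G^2) * hI
  rw [hW, hsub] at hpt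
  rw [Complex.real_smul] at hpt
  have hs0 : s ≠ 0 := by
    have : Real.sin (a * π) < 0 := by
      apply Real.sin_neg_of_neg_of_neg_pi_lt
      · nlinarith [Real.pi_pos]
      · nlinarith [Real.pi_pos]
    rw [hsdef]
    exact_mod_cast this.ne
  have hpi : (π:ℂ) ≠ 0 := by exact_mod_cast Real.pi_ne_zero
  have hprod := euler_prod a ha ha0 ha2
  rw [← hK, ← hsdef] at hprod
  have hsq := congrArg (fun z => z^2) hprod
  beta_reduce at hsq
  rw [show (2:ℂ) * a * π = 2 * (a * π) by ring, Complex.sin_two_mul, ← hsdef]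
  set J := ∫ θ in (0:ℝ)..π, X 3 1 θ with hJ
  push_cast at hpt
  have hI0 := Complex.I_ne_zero
  have h3 : 2 * (π:ℂ)^3 * J = s^3 * K^2 := by
    have : (4 * Complex.I * s * π) * (2 * (π:ℂ)^3 * J) = (4 * Complex.I * s * π) * (s^3 * K^2) := by
      linear_combination hpt
    exact mul_left_cancel₀ (mul_ne_zero (mul_ne_zero (mul_ne_zero (by norm_num) hI0) hs0) hpi) this
  have : (2 * (π:ℂ)^2) * (J * (π * (2 * a + 1)^2)) = (2 * (π:ℂ)^2) * (2 * s * Complex.cos (a * π) * Complex.cos (a * π)) := by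
    linear_combination (2 * (a:ℂ) + 1)^2 * h3 + s * hsq
  exact mul_left_cancel₀ (mul_ne_zero two_ne_zero (pow_ne_zero 2 hpi)) this

theorem all_nu (ν : ℂ) :
    (∫ θ in (0:ℝ)..π, (Real.sin θ : ℂ) *
      (Real.cos θ * legendreP ν (Real.cos θ)^3 * legendreP ν (-Real.cos θ)^1)) * (π * (2*ν+1)^2)
      = Complex.sin (2 * ν * π) * Complex.cos (ν * π) := by
  set f : ℂ → ℂ := fun ν => (∫ θ in (0:ℝ)..π, (Real.sin θ : ℂ) *
      (Real.cos θ * legendreP ν (Real.cos θ)^3 * legendreP ν (-Real.cos θ)^1)) * (π * (2*ν+1)^2) with hf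
  set g : ℂ → ℂ := fun ν => Complex.sin (2 * ν * π) * Complex.cos (ν * π) with hg
  have df : Differentiable ℂ f := main_diff.mul (by fun_prop)
  have dg : Differentiable ℂ g := by fun_prop
  have hfr : ∃ᶠ z in 𝓝[≠] ((-1/2:ℝ):ℂ), f z = g z := by
    set x : ℕ → ℝ := fun n => -1/2 + 1/4 * (1 / ((n:ℝ)+1)) with hx
    have hpos : ∀ n : ℕ, 0 < 1 / ((n:ℝ)+1) := fun n => by positivity
    have hle : ∀ n : ℕ, 1 / ((n:ℝ)+1) ≤ 1 := fun n => by
      rw [div_le_one (by positivity)]; linarith [(Nat.cast_nonneg n : (0:ℝ) ≤ n)]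
    have ht : Tendsto (fun n => (x n : ℂ)) atTop (𝓝[≠] ((-1/2:ℝ):ℂ)) := by
      rw [tendsto_nhdsWithin_iff]
      constructor
      · have h1 := ((tendsto_one_div_add_atTop_nhds_zero_nat (𝕜 := ℝ)).const_mul (1/4)).const_add (-1/2)
        rw [mul_zero, add_zero] at h1
        exact (Complex.continuous_ofReal.tendsto _).comp h1
      · refine Eventually.of_forall fun n => ?_
        simp only [Set.mem_compl_iff, Set.mem_singleton_iff, Complex.ofReal_inj]
        have := hpos n
        simp only [hx]; intro h; linarith
    refine ht.frequently (Frequently.of_forall fun n => ?_)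
    have h1 := hpos n
    have h2 := hle n
    exact strip_integral (x n) (by simp only [hx]; linarith) (by simp only [hx]; linarith)
      (by simp only [hx]; intro h; linarith)
  have := AnalyticOnNhd.eq_of_frequently_eq (f := f) (g := g) (fun z _ => df.analyticAt z) (fun z _ => dg.analyticAt z) hfr
  exact congrFun this ν

theorem stmt_18 (ν : ℂ) (hν : ν ≠ -1/2) :
    (∫ x in (-1:ℝ)..1, (x:ℂ) * (legendreP ν x)^3 * legendreP ν (-x))
      = Complex.sin (2 * ν * (π:ℂ)) * Complex.cos (ν * (π:ℂ)) / ((2*ν+1)^2 * (π:ℂ)) := by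
  have h := all_nu ν
  simp only [pow_one] at h
  have hpi : (π:ℂ) ≠ 0 := by exact_mod_cast Real.pi_ne_zero
  have h2 : 2*ν+1 ≠ 0 := by
    intro h; apply hν; linear_combination h/2
  rw [cos_cov (fun x => (x:ℂ) * (legendreP ν x)^3 * legendreP ν (-x)),
    eq_div_iff (mul_ne_zero (pow_ne_zero 2 h2) hpi), ← h]
  ring
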